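/- arXiv:math/0702609 — 7 statements merged into one kernel-verified Lean document; each statement's English description precedes it below -/
import Mathlib

section
/- Let f be a positive function, continuously differentiable and strictly increasing on some interval (0, u₀], which belongs to the class Γ at 0 with auxiliary function ρ(u) = f(u)/f′(u), where ρ is nondecreasing on (0, u₀] and ρ(s)/s → 0 as s → 0⁺. Then for every natural number p, as s → 0⁺, ∫₀¹ (tᵖ/√(1−t²)) · f(s√(1−t²)) dt ∼ 2^{(p−1)/2} · Γ((p+1)/2) · f(s) · (ρ(s)/s)^{(p+1)/2}, where Γ(u) = ∫₀^∞ s^{u−1} e^{−s} ds is the Gamma function and ∼ means the ratio of the two sides tends to 1. -/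
open Filter Real Set

open MeasureTheory
open scoped Topology

/-! Write `ε = ρ(s)/s`. The substitution `√(1 - t²) = 1 - εx` turns the integral into
`ε^((p+1)/2) ∫₀^{1/ε} (x(2 - εx))^((p-1)/2) f(s - ρ(s)x) dx`. The class `Γ` gives
`f(s - ρ(s)x)/f(s) → e⁻ˣ`. Since `f'/f = 1/ρ` is at least `1/ρ(s)` to the left of `s`, the ratio
is also at most `e⁻ˣ`, so by dominated convergence the last integral, divided by `f(s)`, tends to
`∫₀^∞ (2x)^((p-1)/2) e⁻ˣ dx`, a Gamma integral. -/

/-- Membership of `f` in de Haan's class `Γ` at `0` with auxiliary function `ρ`. Only the two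
limits are recorded; positivity and measurability of `f` and `ρ` are to be assumed separately. -/
structure IsGammaClassAtZero (f ρ : ℝ → ℝ) : Prop where
  tendsto_aux_div : Tendsto (fun s => ρ s / s) (𝓝[>] 0) (𝓝 0)
  tendsto_ratio (x : ℝ) : Tendsto (fun h => f (h + ρ h * x) / f h) (𝓝[>] 0) (𝓝 (exp x))

lemma sqrt_one_sub_sq_mem_Ioo {w : ℝ} (hw : w ∈ Ioo (0 : ℝ) 1) : √(1 - w ^ 2) ∈ Ioo (0 : ℝ) 1 := by
  have hsq : w ^ 2 < 1 := pow_lt_one₀ hw.1.le hw.2 two_ne_zero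
  refine ⟨sqrt_pos.2 (sub_pos.2 hsq), (sqrt_lt' one_pos).2 ?_⟩
  rw [one_pow]
  exact sub_lt_self 1 (pow_pos hw.1 2)

lemma sqrt_one_sub_sq_sqrt_one_sub_sq {w : ℝ} (hw : w ∈ Icc (0 : ℝ) 1) :
    √(1 - √(1 - w ^ 2) ^ 2) = w := by
  rw [sq_sqrt (sub_nonneg.2 (pow_le_one₀ hw.1 hw.2)), sub_sub_cancel, sqrt_sq hw.1]

lemma bijOn_sqrt_one_sub_sq : BijOn (fun w : ℝ => √(1 - w ^ 2)) (Ioo 0 1) (Ioo 0 1) :=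
  have hinv : LeftInvOn (fun w : ℝ => √(1 - w ^ 2)) (fun w : ℝ => √(1 - w ^ 2)) (Ioo 0 1) :=
    fun _ hw => sqrt_one_sub_sq_sqrt_one_sub_sq (Ioo_subset_Icc_self hw)
  InvOn.bijOn ⟨hinv, hinv⟩ (fun _ => sqrt_one_sub_sq_mem_Ioo) (fun _ => sqrt_one_sub_sq_mem_Ioo)

lemma hasDerivAt_sqrt_one_sub_sq {w : ℝ} (hw : w ∈ Ioo (0 : ℝ) 1) :
    HasDerivAt (fun w : ℝ => √(1 - w ^ 2)) (-(w / √(1 - w ^ 2))) w := by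
  have hpos : 0 < √(1 - w ^ 2) := (sqrt_one_sub_sq_mem_Ioo hw).1
  refine (((hasDerivAt_pow 2 w).const_sub 1).sqrt (sqrt_pos.1 hpos).ne').congr_deriv ?_
  push_cast
  field_simp

lemma integral_rpow_div_sqrt_mul_comp_sqrt (q : ℝ) (g : ℝ → ℝ) :
    ∫ t in (0 : ℝ)..1, t ^ q / √(1 - t ^ 2) * g √(1 - t ^ 2) =
      ∫ w in (0 : ℝ)..1, (1 - w ^ 2) ^ ((q - 1) / 2) * g w := by
  simp only [intervalIntegral.integral_of_le zero_le_one, integral_Ioc_eq_integral_Ioo]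
  rw [← bijOn_sqrt_one_sub_sq.image_eq, integral_image_eq_integral_abs_deriv_smul measurableSet_Ioo
    (fun w hw => (hasDerivAt_sqrt_one_sub_sq hw).hasDerivWithinAt) bijOn_sqrt_one_sub_sq.injOn,
    bijOn_sqrt_one_sub_sq.image_eq]
  refine setIntegral_congr_fun measurableSet_Ioo fun w hw => ?_
  have hv : 0 < √(1 - w ^ 2) := (sqrt_one_sub_sq_mem_Ioo hw).1
  have hpow : (1 - w ^ 2) ^ ((q - 1) / 2) = √(1 - w ^ 2) ^ q / √(1 - w ^ 2) := by
    rw [← rpow_sub_one hv.ne', sqrt_eq_rpow, ← rpow_mul (sqrt_pos.1 hv).le]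
    ring_nf
  have hw0 : w ≠ 0 := hw.1.ne'
  simp only [sqrt_one_sub_sq_sqrt_one_sub_sq (Ioo_subset_Icc_self hw), abs_neg, smul_eq_mul,
    abs_of_pos (div_pos hw.1 hv), hpow]
  field_simp

lemma integral_one_sub_sq_rpow_mul_eq_rescaled (a : ℝ) (g : ℝ → ℝ) {ε : ℝ} (hε : 0 < ε) :
    ∫ w in (0 : ℝ)..1, (1 - w ^ 2) ^ a * g w =
      ε ^ (a + 1) * ∫ x in Ioo 0 ε⁻¹, (x * (2 - ε * x)) ^ a * g (1 - ε * x) := by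
  have haffine := intervalIntegral.integral_comp_sub_mul (a := 0) (b := ε⁻¹)
    (fun w => (1 - w ^ 2) ^ a * g w) hε.ne' 1
  rw [mul_inv_cancel₀ hε.ne', sub_self, mul_zero, sub_zero, eq_inv_smul_iff₀ hε.ne'] at haffine
  rw [← haffine, intervalIntegral.integral_of_le (inv_pos.2 hε).le, integral_Ioc_eq_integral_Ioo,
    rpow_add_one hε.ne', mul_comm (ε ^ a), mul_assoc, ← integral_const_mul, smul_eq_mul]
  congr 1
  refine setIntegral_congr_fun measurableSet_Ioo fun x hx => ?_
  have hεx : ε * x < 1 := by simpa [hε.ne'] using mul_lt_mul_of_pos_left hx.2 hε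
  have hfactor : 1 - (1 - ε * x) ^ 2 = ε * (x * (2 - ε * x)) := by ring
  simp only [hfactor]
  rw [mul_rpow hε.le (mul_nonneg hx.1.le (by linarith)), mul_assoc]

lemma le_exp_mul_of_mul_le_deriv {f f' : ℝ → ℝ} {k a b : ℝ} (hab : a ≤ b)
    (hf : ∀ x ∈ Icc a b, HasDerivAt f (f' x) x) (hk : ∀ x ∈ Icc a b, k * f x ≤ f' x) :
    f a ≤ exp (-(k * (b - a))) * f b := by
  have hderiv : ∀ x ∈ Icc a b, HasDerivAt (fun x => exp (-(k * x)) * f x)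
      (exp (-(k * x)) * (f' x - k * f x)) x := fun x hx => by
    refine (((hasDerivAt_id' x).const_mul k).neg.exp.mul (hf x hx)).congr_deriv ?_
    simp only [Pi.neg_apply]
    ring
  have hmono : MonotoneOn (fun x => exp (-(k * x)) * f x) (Icc a b) :=
    monotoneOn_of_hasDerivWithinAt_nonneg (convex_Icc a b)
      (fun x hx => (hderiv x hx).continuousAt.continuousWithinAt)
      (fun x hx => (hderiv x (interior_subset hx)).hasDerivWithinAt)
      (fun x hx => mul_nonneg (exp_pos _).le (sub_nonneg.2 (hk x (interior_subset hx))))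
  calc f a = exp (k * a) * (exp (-(k * a)) * f a) := by
        rw [← mul_assoc, ← exp_add, add_neg_cancel, exp_zero, one_mul]
    _ ≤ exp (k * a) * (exp (-(k * b)) * f b) := by
        exact mul_le_mul_of_nonneg_left (hmono (left_mem_Icc.2 hab) (right_mem_Icc.2 hab) hab)
          (exp_pos _).le
    _ = exp (-(k * (b - a))) * f b := by
        rw [← mul_assoc, ← exp_add]
        ring_nf

lemma sub_mul_mem_Ioo_of_mem_Ioo_div {r s x : ℝ} (hr : 0 < r) (hx : x ∈ Ioo 0 (s / r)) :
    s - r * x ∈ Ioo 0 s :=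
  ⟨sub_pos.2 ((lt_div_iff₀' hr).1 hx.2), sub_lt_self s (mul_pos hr hx.1)⟩

lemma div_le_exp_neg_of_hasDerivAt_div {f ρ : ℝ → ℝ} {s x : ℝ}
    (hf : ∀ u ∈ Ioc 0 s, 0 < f u) (hρ : ∀ u ∈ Ioc 0 s, 0 < ρ u) (hρmono : MonotoneOn ρ (Ioc 0 s))
    (hderiv : ∀ u ∈ Ioc 0 s, HasDerivAt f (f u / ρ u) u) (hs : 0 < s)
    (hx : x ∈ Ioo 0 (s / ρ s)) :
    f (s - ρ s * x) / f s ≤ exp (-x) := by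
  have hs_mem : s ∈ Ioc 0 s := right_mem_Ioc.2 hs
  have hv : s - ρ s * x ∈ Ioo 0 s := sub_mul_mem_Ioo_of_mem_Ioo_div (hρ s hs_mem) hx
  have hsub : ∀ u ∈ Icc (s - ρ s * x) s, u ∈ Ioc 0 s := fun u hu => ⟨hv.1.trans_le hu.1, hu.2⟩
  have hgrowth : ∀ u ∈ Icc (s - ρ s * x) s, (ρ s)⁻¹ * f u ≤ f u / ρ u := fun u hu => by
    have hu' := hsub u hu
    rw [inv_mul_eq_div]
    exact div_le_div_of_nonneg_left (hf u hu').le (hρ u hu') (hρmono hu' hs_mem hu'.2)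
  have hle := le_exp_mul_of_mul_le_deriv hv.2.le (fun u hu => hderiv u (hsub u hu)) hgrowth
  rwa [sub_sub_cancel, inv_mul_cancel_left₀ (hρ s hs_mem).ne', ← div_le_iff₀ (hf s hs_mem)] at hle

section Limit

variable {f ρ : ℝ → ℝ} {a s x u₀ : ℝ}

/-- The integrand obtained from `(1 - w²)^a f(sw)` on `(0, 1)` by substituting
`w = 1 - (ρ s / s) x` and removing the factor `f s * (ρ s / s) ^ (a + 1)`. It is cut off at
`x = s / ρ s`, which corresponds to `w = 0`, so that all `s` share the domain `(0, ∞)`. -/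
noncomputable def rescaledIntegrand (a : ℝ) (f ρ : ℝ → ℝ) (s : ℝ) : ℝ → ℝ :=
  (Iio (s / ρ s)).indicator fun x => (x * (2 - ρ s / s * x)) ^ a * (f (s - ρ s * x) / f s)

lemma integral_one_sub_sq_rpow_mul_comp_mul (hs : 0 < s) (hρ : 0 < ρ s) (hf : f s ≠ 0) :
    ∫ w in (0 : ℝ)..1, (1 - w ^ 2) ^ a * f (s * w) =
      f s * (ρ s / s) ^ (a + 1) * ∫ x in Ioi 0, rescaledIntegrand a f ρ s x := by
  have hs0 : s ≠ 0 := hs.ne'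
  rw [integral_one_sub_sq_rpow_mul_eq_rescaled a (fun w => f (s * w)) (div_pos hρ hs), inv_div,
    rescaledIntegrand, setIntegral_indicator measurableSet_Iio, Ioi_inter_Iio, mul_comm (f s),
    mul_assoc, ← integral_const_mul (f s)]
  congr 2 with x
  have harg : s * (1 - ρ s / s * x) = s - ρ s * x := by field_simp
  rw [harg]
  field_simp

lemma aestronglyMeasurable_rescaledIntegrand (hf : ContinuousOn f (Ioo 0 s)) (hρ : 0 < ρ s) :
    AEStronglyMeasurable (rescaledIntegrand a f ρ s) (volume.restrict (Ioi 0)) := by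
  rw [rescaledIntegrand, aestronglyMeasurable_indicator_iff measurableSet_Iio,
    Measure.restrict_restrict measurableSet_Iio, inter_comm, Ioi_inter_Iio]
  have hcomp : ContinuousOn (fun x => f (s - ρ s * x)) (Ioo 0 (s / ρ s)) :=
    hf.comp (by fun_prop) fun x hx => sub_mul_mem_Ioo_of_mem_Ioo_div hρ hx
  exact (by fun_prop : Measurable fun x : ℝ => (x * (2 - ρ s / s * x)) ^ a).aestronglyMeasurable.mul
    ((hcomp.div_const _).aestronglyMeasurable measurableSet_Ioo)

lemma rpow_le_two_rpow_abs {z : ℝ} (hz : z ∈ Icc (1 : ℝ) 2) (a : ℝ) : z ^ a ≤ 2 ^ |a| :=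
  calc z ^ a ≤ z ^ |a| := rpow_le_rpow_of_exponent_le hz.1 (le_abs_self a)
    _ ≤ 2 ^ |a| := rpow_le_rpow (zero_le_one.trans hz.1) hz.2 (abs_nonneg a)

lemma norm_rescaledIntegrand_le (hf : ∀ u ∈ Ioc 0 s, 0 < f u) (hρ : ∀ u ∈ Ioc 0 s, 0 < ρ u)
    (hρmono : MonotoneOn ρ (Ioc 0 s)) (hderiv : ∀ u ∈ Ioc 0 s, HasDerivAt f (f u / ρ u) u)
    (hs : 0 < s) (hx : 0 < x) :
    ‖rescaledIntegrand a f ρ s x‖ ≤ 2 ^ |a| * (exp (-x) * x ^ a) := by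
  rcases le_or_gt (s / ρ s) x with hxs | hxs
  · rw [rescaledIntegrand, indicator_of_notMem (notMem_Iio.2 hxs), norm_zero]
    positivity
  have hs_mem : s ∈ Ioc 0 s := right_mem_Ioc.2 hs
  have hρs : 0 < ρ s := hρ s hs_mem
  have hv : s - ρ s * x ∈ Ioo 0 s := sub_mul_mem_Ioo_of_mem_Ioo_div hρs ⟨hx, hxs⟩
  have hεx : ρ s / s * x ∈ Ioo 0 1 := by
    refine ⟨by positivity, ?_⟩
    rw [div_mul_eq_mul_div, div_lt_one hs]
    exact sub_pos.1 hv.1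
  have htwo : 2 - ρ s / s * x ∈ Icc (1 : ℝ) 2 := ⟨by linarith [hεx.2], by linarith [hεx.1]⟩
  have htwo0 : 0 ≤ 2 - ρ s / s * x := zero_le_one.trans htwo.1
  have hratio0 : 0 ≤ f (s - ρ s * x) / f s :=
    (div_pos (hf _ (Ioo_subset_Ioc_self hv)) (hf s hs_mem)).le
  have hratio : f (s - ρ s * x) / f s ≤ exp (-x) :=
    div_le_exp_neg_of_hasDerivAt_div hf hρ hρmono hderiv hs ⟨hx, hxs⟩
  rw [rescaledIntegrand, indicator_of_mem (mem_Iio.2 hxs), norm_of_nonneg (by positivity)]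
  calc (x * (2 - ρ s / s * x)) ^ a * (f (s - ρ s * x) / f s)
      = (2 - ρ s / s * x) ^ a * (f (s - ρ s * x) / f s * x ^ a) := by
        rw [mul_rpow hx.le htwo0]
        ring
    _ ≤ 2 ^ |a| * (exp (-x) * x ^ a) := by
        gcongr
        exact rpow_le_two_rpow_abs htwo a

lemma IsGammaClassAtZero.tendsto_rescaledIntegrand (hΓ : IsGammaClassAtZero f ρ)
    (hρ : ∀ᶠ s in 𝓝[>] 0, 0 < ρ s) (a : ℝ) (hx : 0 < x) :
    Tendsto (fun s => rescaledIntegrand a f ρ s x) (𝓝[>] 0) (𝓝 ((2 * x) ^ a * exp (-x))) := by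
  have hε : Tendsto (fun s => ρ s / s * x) (𝓝[>] 0) (𝓝 0) := by
    simpa using hΓ.tendsto_aux_div.mul_const x
  have hbase : Tendsto (fun s => x * (2 - ρ s / s * x)) (𝓝[>] 0) (𝓝 (2 * x)) := by
    simpa [mul_comm x] using (hε.const_sub 2).const_mul x
  refine ((hbase.rpow_const (p := a) (.inl (by positivity))).mul
    (hΓ.tendsto_ratio (-x))).congr' ?_
  filter_upwards [self_mem_nhdsWithin, hρ, hε.eventually_lt_const one_pos] with s hs hρs hlt
  have hxs : x < s / ρ s := by
    rwa [lt_div_iff₀' hρs, ← div_lt_one hs, ← div_mul_eq_mul_div]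
  rw [rescaledIntegrand, indicator_of_mem (mem_Iio.2 hxs), mul_neg, ← sub_eq_add_neg]

lemma integral_two_mul_rpow_mul_exp_neg (a : ℝ) (ha : -1 < a) :
    ∫ x in Ioi (0 : ℝ), (2 * x) ^ a * exp (-x) = 2 ^ a * Gamma (a + 1) := by
  rw [Gamma_eq_integral (by linarith), ← integral_const_mul]
  refine setIntegral_congr_fun measurableSet_Ioi fun x hx => ?_
  simp only [mul_rpow zero_le_two (le_of_lt hx), add_sub_cancel_right]
  ring

lemma IsGammaClassAtZero.tendsto_integral_rescaledIntegrand (hΓ : IsGammaClassAtZero f ρ)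
    (hu₀ : 0 < u₀) (hf : ∀ u ∈ Ioo 0 u₀, 0 < f u) (hρ : ∀ u ∈ Ioo 0 u₀, 0 < ρ u)
    (hρmono : MonotoneOn ρ (Ioo 0 u₀)) (hderiv : ∀ u ∈ Ioo 0 u₀, HasDerivAt f (f u / ρ u) u)
    (ha : -1 < a) :
    Tendsto (fun s => ∫ x in Ioi 0, rescaledIntegrand a f ρ s x) (𝓝[>] 0)
      (𝓝 (2 ^ a * Gamma (a + 1))) := by
  have hnear : ∀ᶠ s in 𝓝[>] (0 : ℝ), s ∈ Ioo 0 u₀ := Ioo_mem_nhdsGT hu₀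
  rw [← integral_two_mul_rpow_mul_exp_neg a ha]
  refine tendsto_integral_filter_of_dominated_convergence
    (fun x => 2 ^ |a| * (exp (-x) * x ^ a)) ?measurable ?bound ?integrable ?limit
  case measurable =>
    filter_upwards [hnear] with s hs
    exact aestronglyMeasurable_rescaledIntegrand
      (fun u hu => (hderiv u ⟨hu.1, hu.2.trans hs.2⟩).continuousAt.continuousWithinAt) (hρ s hs)
  case bound =>
    filter_upwards [hnear] with s hs
    have hsub : Ioc 0 s ⊆ Ioo 0 u₀ := fun u hu => ⟨hu.1, hu.2.trans_lt hs.2⟩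
    exact (ae_restrict_mem measurableSet_Ioi).mono fun x hx => norm_rescaledIntegrand_le
      (fun u hu => hf u (hsub hu)) (fun u hu => hρ u (hsub hu)) (hρmono.mono hsub)
      (fun u hu => hderiv u (hsub hu)) hs.1 hx
  case integrable =>
    simpa only [add_sub_cancel_right] using
      (GammaIntegral_convergent (neg_lt_iff_pos_add.1 ha)).const_mul (2 ^ |a|)
  case limit =>
    exact (ae_restrict_mem measurableSet_Ioi).mono fun x hx =>
      hΓ.tendsto_rescaledIntegrand (hnear.mono hρ) a hx

end Limit

theorem stmt3_general {f ρ : ℝ → ℝ} {u₀ : ℝ} (hΓ : IsGammaClassAtZero f ρ) (hu₀ : 0 < u₀)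
    (hfpos : ∀ u ∈ Ioc 0 u₀, 0 < f u) (hfdiff : DifferentiableOn ℝ f (Ioc 0 u₀))
    (hρdef : ∀ u ∈ Ioc 0 u₀, ρ u = f u / deriv f u) (hρpos : ∀ u ∈ Ioc 0 u₀, 0 < ρ u)
    (hρmono : MonotoneOn ρ (Ioc 0 u₀)) {q : ℝ} (hq : -1 < q) :
    Tendsto (fun s => (∫ t in (0 : ℝ)..1, t ^ q / √(1 - t ^ 2) * f (s * √(1 - t ^ 2))) /
        (2 ^ ((q - 1) / 2) * Gamma ((q + 1) / 2) * f s * (ρ s / s) ^ ((q + 1) / 2)))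
      (𝓝[>] 0) (𝓝 1) := by
  have hsub : Ioo 0 u₀ ⊆ Ioc 0 u₀ := Ioo_subset_Ioc_self
  have hderiv : ∀ u ∈ Ioo 0 u₀, HasDerivAt f (f u / ρ u) u := fun u hu => by
    rw [hρdef u (hsub hu), div_div_cancel₀ (hfpos u (hsub hu)).ne']
    exact (hfdiff.differentiableAt (Ioc_mem_nhds hu.1 hu.2)).hasDerivAt
  have hexp : (q - 1) / 2 + 1 = (q + 1) / 2 := by ring
  have hconst : 0 < (2 : ℝ) ^ ((q - 1) / 2) * Gamma ((q + 1) / 2) :=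
    mul_pos (rpow_pos_of_pos two_pos _) (Gamma_pos_of_pos (by linarith))
  have hlim := hΓ.tendsto_integral_rescaledIntegrand (a := (q - 1) / 2) hu₀
    (fun u hu => hfpos u (hsub hu)) (fun u hu => hρpos u (hsub hu)) (hρmono.mono hsub) hderiv
    (by linarith)
  rw [hexp] at hlim
  have hone := hlim.div_const (2 ^ ((q - 1) / 2) * Gamma ((q + 1) / 2))
  rw [div_self hconst.ne'] at hone
  refine hone.congr' ?_
  filter_upwards [Ioo_mem_nhdsGT hu₀] with s hs
  have hfs : 0 < f s := hfpos s (hsub hs)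
  have hε : 0 < (ρ s / s) ^ ((q + 1) / 2) := rpow_pos_of_pos (div_pos (hρpos s (hsub hs)) hs.1) _
  rw [integral_rpow_div_sqrt_mul_comp_sqrt q (fun w => f (s * w)),
    integral_one_sub_sq_rpow_mul_comp_mul hs.1 (hρpos s (hsub hs)) hfs.ne', hexp, mul_assoc _ (f s),
    mul_comm (f s * _), mul_div_mul_right _ _ (mul_pos hfs hε).ne']

/-- Lemma `prel`: if `f` is a positive, C¹, strictly increasing function on
`(0,u₀]` belonging to the class Γ at 0 with auxiliary function `ρ = f/f′`, `ρ` nondecreasing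
with `ρ(s)/s → 0`, then for all `p : ℕ`,
`∫₀¹ tᵖ/√(1−t²) f(s√(1−t²)) dt ∼ 2^{(p−1)/2} Γ((p+1)/2) f(s) (ρ(s)/s)^{(p+1)/2}` as `s → 0⁺`. -/
theorem stmt3 (f ρ : ℝ → ℝ) (u₀ : ℝ) (hu₀ : 0 < u₀)
    (hfpos : ∀ u ∈ Set.Ioc (0:ℝ) u₀, 0 < f u)
    (hfC1 : ContDiffOn ℝ 1 f (Set.Ioc 0 u₀))
    (hfmono : StrictMonoOn f (Set.Ioc 0 u₀))
    (hρdef : ∀ u ∈ Set.Ioc (0:ℝ) u₀, ρ u = f u / deriv f u)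
    (hρpos : ∀ u ∈ Set.Ioc (0:ℝ) u₀, 0 < ρ u)
    (hρmono : MonotoneOn ρ (Set.Ioc 0 u₀))
    (hρ0 : Tendsto (fun s => ρ s / s) (nhdsWithin 0 (Set.Ioi 0)) (nhds 0))
    (hΓ : ∀ x : ℝ, Tendsto (fun h => f (h + ρ h * x) / f h) (nhdsWithin 0 (Set.Ioi 0))
      (nhds (Real.exp x))) :
    ∀ p : ℕ, Tendsto (fun s =>
        (∫ t in (0:ℝ)..1, t ^ p / Real.sqrt (1 - t^2) * f (s * Real.sqrt (1 - t^2))) /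
        ((2:ℝ) ^ (((p:ℝ) - 1)/2) * Real.Gamma (((p:ℝ) + 1)/2) * f s *
          (ρ s / s) ^ (((p:ℝ) + 1)/2)))
      (nhdsWithin 0 (Set.Ioi 0)) (nhds 1) := by
  intro p
  simpa only [rpow_natCast] using stmt3_general ⟨hρ0, hΓ⟩ hu₀ hfpos
    (hfC1.differentiableOn one_ne_zero) hρdef hρpos hρmono (neg_one_lt_zero.trans_le p.cast_nonneg)
end

section
/- Let (τ_i)_{i≥1} and (s_i)_{i≥1} be real sequences and let (e_i)_{i≥1} be the standard orthonormal basis of ℓ²(ℕ). Consider the operator R with matrix entries ⟨R e_i, e_j⟩ = τ_i τ_j for i ≠ j and ⟨R e_i, e_i⟩ = τ_i² + s_i, i.e. Rx = ⟨τ, x⟩ τ + (s_i x_i)_{i≥1}. Then: (i) if ∑_i τ_i² < ∞ and ∑_i s_i² < ∞, R is a bounded self-adjoint operator on ℓ² with ∑_i ‖R e_i‖² < ∞ (R is Hilbert–Schmidt); (ii) if ∑_i τ_i² < ∞ and (s_i) is bounded, R is a bounded self-adjoint operator; (iii) if ∑_i τ_i² < ∞ and s_i → 0, R is compact; (iv)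 if (s_i) is unbounded, or if (s_i) is bounded and ∑_i τ_i² = ∞, then there is no bounded linear operator T on ℓ² with ⟨T e_i, e_j⟩ = τ_i τ_j for all i ≠ j and ⟨T e_i, e_i⟩ = τ_i² + s_i for all i. -/
open Filter Set
open scoped RealInnerProductSpace

/-!
The rank-one operator `x ↦ ⟪τ, x⟫ τ` is compact and symmetric, and the diagonal operator depends
continuously on its symbol `s ∈ ℓ^∞`; a symbol vanishing at infinity is an `ℓ^∞`-limit of finitely
supported ones, whose diagonal operators have finite rank. Conversely, let `T` be bounded with
matrix `τ τ* + diag s`. If `τ i ≠ 0`, the `i`-th column `T eᵢ ∈ ℓ²` is a nonzero multiple of `τ` up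
to one entry, so `τ ∈ ℓ²`. Then `T - τ τ*` is a bounded diagonal operator, so `s` is bounded.
-/

section

open InnerProductSpace
open scoped ENNReal lp Topology ComplexConjugate

variable {ι : Type*} {𝕜 : Type*} [RCLike 𝕜]

theorem memℓp_two_iff_summable_sq {E : ι → Type*} [∀ i, NormedAddCommGroup (E i)]
    {f : ∀ i, E i} : Memℓp f 2 ↔ Summable fun i => ‖f i‖ ^ 2 := by
  simp [memℓp_gen_iff (p := 2) (by norm_num)]

theorem memℓp_infty_of_tendsto_cofinite {E : Type*} [NormedAddCommGroup E] {f : ι → E} {a : E}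
    (hf : Tendsto f cofinite (𝓝 a)) : Memℓp f ∞ :=
  memℓp_infty hf.norm.bddAbove_range_of_cofinite

theorem hasSum_single_of_tendsto_cofinite [DecidableEq ι] {E : ι → Type*}
    [∀ i, NormedAddCommGroup (E i)] (f : lp E ∞)
    (hf : Tendsto (fun i => ‖f i‖) cofinite (𝓝 0)) :
    HasSum (fun i => lp.single ∞ i (f i)) f := by
  refine Metric.nhds_basis_closedBall.tendsto_right_iff.2 fun ε hε => ?_
  have hfin : {i | ¬ ‖f i‖ < ε}.Finite := eventually_cofinite.1 (hf.eventually_lt_const hε)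
  filter_upwards [eventually_ge_atTop hfin.toFinset] with A hA
  rw [mem_closedBall_iff_norm]
  refine lp.norm_le_of_forall_le hε.le fun j => ?_
  have hpartial : (∑ i ∈ A, lp.single ∞ i (f i)) j = if j ∈ A then f j else 0 := by
    rw [lp.coeFn_sum, Finset.sum_apply]
    simp only [lp.coeFn_single, Finset.sum_pi_single]
  rw [lp.coeFn_sub, Pi.sub_apply, hpartial]
  by_cases hj : j ∈ A
  · simp [hj, hε.le]
  · have hsmall : ‖f j‖ < ε := by
      by_contra h
      exact hj (hA (hfin.mem_toFinset.2 h))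
    simpa [hj] using hsmall.le

/-- The diagonal operator on `ℓ^p` with bounded symbol `s`, as a continuous linear function of
`s ∈ ℓ^∞`; this is Hölder multiplication `ℓ^∞ × ℓ^p → ℓ^p`. -/
noncomputable def diagonalCLM (𝕜 : Type*) [RCLike 𝕜] (p : ℝ≥0∞) [Fact (1 ≤ p)] :
    ℓ^∞(ι, 𝕜) →L[𝕜] ℓ^p(ι, 𝕜) →L[𝕜] ℓ^p(ι, 𝕜) :=
  lp.holderL (K := 1) p (fun _ => ContinuousLinearMap.mul 𝕜 𝕜) (by simp)

section diagonalCLM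

variable {p : ℝ≥0∞} [Fact (1 ≤ p)]

theorem diagonalCLM_apply (s : ℓ^∞(ι, 𝕜)) (x : ℓ^p(ι, 𝕜)) (i : ι) :
    diagonalCLM 𝕜 p s x i = s i * x i :=
  rfl

theorem diagonalCLM_apply_single [DecidableEq ι] (s : ℓ^∞(ι, 𝕜)) (i : ι) (a : 𝕜) :
    diagonalCLM 𝕜 p s (lp.single p i a) = lp.single p i (s i * a) := by
  ext j
  rcases eq_or_ne j i with rfl | hj
  · simp [diagonalCLM_apply]
  · simp [diagonalCLM_apply, hj]

theorem isCompactOperator_diagonalCLM_single [DecidableEq ι] (i : ι) (c : 𝕜) :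
    IsCompactOperator (diagonalCLM 𝕜 p (lp.single ∞ i c) : ℓ^p(ι, 𝕜) → ℓ^p(ι, 𝕜)) := by
  have hfactor : diagonalCLM 𝕜 p (lp.single ∞ i c) =
      lp.singleContinuousLinearMap 𝕜 (fun _ => 𝕜) p i ∘L (c • lp.evalCLM 𝕜 (fun _ => 𝕜) p i) := by
    ext x j
    rcases eq_or_ne j i with rfl | hj
    · simp [diagonalCLM_apply, lp.evalCLM]
    · simp [diagonalCLM_apply, hj]
  rw [hfactor, ContinuousLinearMap.coe_comp]
  exact (isCompactOperator_of_locallyCompactSpace_dom _).clm_comp _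

theorem isCompactOperator_diagonalCLM (s : ℓ^∞(ι, 𝕜)) (hs : Tendsto s cofinite (𝓝 0)) :
    IsCompactOperator (diagonalCLM 𝕜 p s : ℓ^p(ι, 𝕜) → ℓ^p(ι, 𝕜)) := by
  classical
  have hsum : HasSum (fun i => diagonalCLM 𝕜 p (lp.single ∞ i (s i))) (diagonalCLM 𝕜 p s) :=
    (hasSum_single_of_tendsto_cofinite s (tendsto_zero_iff_norm_tendsto_zero.1 hs)).mapL
      (diagonalCLM 𝕜 p)
  refine isCompactOperator_of_tendsto hsum (Eventually.of_forall fun A => ?_)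
  exact (compactOperator (RingHom.id 𝕜) ℓ^p(ι, 𝕜) ℓ^p(ι, 𝕜)).sum_mem fun i _ =>
    isCompactOperator_diagonalCLM_single i (s i)

end diagonalCLM

theorem isSymmetric_diagonalCLM {s : ℓ^∞(ι, 𝕜)} (hs : IsSelfAdjoint (s : ι → 𝕜)) :
    (diagonalCLM 𝕜 2 s : ℓ²(ι, 𝕜) →ₗ[𝕜] ℓ²(ι, 𝕜)).IsSymmetric := by
  intro x y
  have hconj (i : ι) : conj (s i) = s i := congrFun hs i
  simp only [ContinuousLinearMap.coe_coe, lp.inner_eq_tsum, diagonalCLM_apply,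
    RCLike.inner_apply, map_mul, hconj]
  exact tsum_congr fun i => by ring

theorem isCompactOperator_rankOne {E F : Type*} [NormedAddCommGroup E] [InnerProductSpace 𝕜 E]
    [NormedAddCommGroup F] [InnerProductSpace 𝕜 F] (x : E) (y : F) :
    IsCompactOperator (rankOne 𝕜 x y) :=
  (isCompactOperator_of_locallyCompactSpace_dom (innerSL 𝕜 y)).clm_comp
    (ContinuousLinearMap.toSpanSingleton 𝕜 x)

variable [DecidableEq ι] {τ s : ι → 𝕜}

/-- The bounded operator `T` on `ℓ²` has the matrix `τ τ* + diag s` in the standard basis. The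
matrix is prescribed column by column, so that the condition makes sense for arbitrary `τ`, `s`. -/
def HasRankOneAddDiagonalMatrix (τ s : ι → 𝕜) (T : ℓ²(ι, 𝕜) →L[𝕜] ℓ²(ι, 𝕜)) : Prop :=
  ∀ i, ⇑(T (lp.single 2 i 1)) = conj (τ i) • τ + Pi.single i (s i)

theorem hasRankOneAddDiagonalMatrix_rankOne_add_diagonalCLM (t : ℓ²(ι, 𝕜)) (s : ℓ^∞(ι, 𝕜)) :
    HasRankOneAddDiagonalMatrix t s (rankOne 𝕜 t t + diagonalCLM 𝕜 2 s) := by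
  intro i
  have hcol : (rankOne 𝕜 t t + diagonalCLM 𝕜 2 s) (lp.single 2 i 1) =
      conj (t i) • t + lp.single 2 i (s i) := by
    simp [diagonalCLM_apply_single, lp.inner_single_right]
  exact congrArg (⇑) hcol

namespace HasRankOneAddDiagonalMatrix

variable {T : ℓ²(ι, 𝕜) →L[𝕜] ℓ²(ι, 𝕜)}

theorem apply_single {t : ℓ²(ι, 𝕜)} (hT : HasRankOneAddDiagonalMatrix t s T) (i : ι) :
    T (lp.single 2 i 1) = conj (t i) • t + lp.single 2 i (s i) :=
  lp.ext (hT i)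

theorem memℓp_two (hT : HasRankOneAddDiagonalMatrix τ s T) : Memℓp τ 2 := by
  by_cases hτ : ∀ i, τ i = 0
  · rw [show τ = 0 from funext hτ]
    exact zero_memℓp
  · obtain ⟨i, hi⟩ := not_forall.1 hτ
    have hcol : τ = (conj (τ i))⁻¹ •
        ⇑(T (lp.single 2 i 1) - lp.single (E := fun _ => 𝕜) 2 i (s i)) := by
      rw [lp.coeFn_sub, hT i, lp.coeFn_single, add_sub_cancel_right,
        inv_smul_smul₀ ((map_ne_zero _).2 hi)]
    rw [hcol]
    exact (lp.memℓp _).const_smul _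

theorem memℓp_infty (hT : HasRankOneAddDiagonalMatrix τ s T) : Memℓp s ∞ := by
  obtain ⟨t, rfl⟩ : ∃ t : ℓ²(ι, 𝕜), ⇑t = τ := ⟨⟨τ, hT.memℓp_two⟩, rfl⟩
  refine _root_.memℓp_infty ⟨‖T - rankOne 𝕜 t t‖, ?_⟩
  rintro _ ⟨i, rfl⟩
  have hdiag : (T - rankOne 𝕜 t t) (lp.single 2 i 1) = lp.single 2 i (s i) := by
    simp [hT.apply_single, lp.inner_single_right]
  calc ‖s i‖ = ‖(T - rankOne 𝕜 t t) (lp.single 2 i 1)‖ := by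
        rw [hdiag, lp.norm_single (by norm_num)]
    _ ≤ ‖T - rankOne 𝕜 t t‖ := ContinuousLinearMap.unit_le_opNorm _ _ (by
        simp [lp.norm_single])

theorem memℓp_columns (hT : HasRankOneAddDiagonalMatrix τ s T) (hs : Memℓp s 2) :
    Memℓp (fun i => T (lp.single 2 i 1)) 2 := by
  obtain ⟨t, rfl⟩ : ∃ t : ℓ²(ι, 𝕜), ⇑t = τ := ⟨⟨τ, hT.memℓp_two⟩, rfl⟩
  refine ((((lp.memℓp t).norm.const_mul ‖t‖).add hs.norm).mono) fun i => ?_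
  calc ‖T (lp.single 2 i 1)‖ ≤ ‖conj (t i) • t‖ + ‖lp.single (E := fun _ => 𝕜) 2 i (s i)‖ := by
        rw [hT.apply_single]
        exact norm_add_le _ _
    _ = ‖t‖ * ‖t i‖ + ‖s i‖ := by
        rw [norm_smul, RCLike.norm_conj, lp.norm_single (by norm_num), mul_comm]

end HasRankOneAddDiagonalMatrix

theorem hasRankOneAddDiagonalMatrix_iff_real_inner {τ s : ι → ℝ} {T : ℓ²(ι, ℝ) →L[ℝ] ℓ²(ι, ℝ)} :
    HasRankOneAddDiagonalMatrix τ s T ↔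
      ∀ i j, ⟪T (lp.single 2 i 1), lp.single 2 j 1⟫ =
        if i = j then τ i ^ 2 + s i else τ i * τ j := by
  refine forall_congr' fun i => funext_iff.trans (forall_congr' fun j => ?_)
  rw [lp.inner_single_right]
  rcases eq_or_ne i j with rfl | hij
  · simp [sq]
  · simp [hij, hij.symm]

theorem stmt8_general (τ s : ι → 𝕜) :
    (Summable (fun i => ‖τ i‖ ^ 2) → Summable (fun i => ‖s i‖ ^ 2) →
      ∃ R, HasRankOneAddDiagonalMatrix τ s R ∧
        (IsSelfAdjoint s → (R : ℓ²(ι, 𝕜) →ₗ[𝕜] ℓ²(ι, 𝕜)).IsSymmetric) ∧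
        Summable fun i => ‖R (lp.single 2 i 1)‖ ^ 2) ∧
    (Summable (fun i => ‖τ i‖ ^ 2) → BddAbove (range fun i => ‖s i‖) →
      ∃ R, HasRankOneAddDiagonalMatrix τ s R ∧
        (IsSelfAdjoint s → (R : ℓ²(ι, 𝕜) →ₗ[𝕜] ℓ²(ι, 𝕜)).IsSymmetric)) ∧
    (Summable (fun i => ‖τ i‖ ^ 2) → Tendsto s cofinite (𝓝 0) →
      ∃ R, HasRankOneAddDiagonalMatrix τ s R ∧ IsCompactOperator R) ∧
    (¬ BddAbove (range fun i => ‖s i‖) ∨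
        (BddAbove (range fun i => ‖s i‖) ∧ ¬ Summable fun i => ‖τ i‖ ^ 2) →
      ¬ ∃ T, HasRankOneAddDiagonalMatrix τ s T) := by
  simp only [← memℓp_two_iff_summable_sq, ← memℓp_infty_iff]
  have hsymm (hτ : Memℓp τ 2) (hs : Memℓp s ∞) : ∃ R, HasRankOneAddDiagonalMatrix τ s R ∧
      (IsSelfAdjoint s → (R : ℓ²(ι, 𝕜) →ₗ[𝕜] ℓ²(ι, 𝕜)).IsSymmetric) :=
    ⟨_, hasRankOneAddDiagonalMatrix_rankOne_add_diagonalCLM ⟨τ, hτ⟩ ⟨s, hs⟩, fun hsa =>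
      (isSymmetric_rankOne_self _).add (isSymmetric_diagonalCLM hsa)⟩
  refine ⟨fun hτ hs => ?_, hsymm, fun hτ hs => ?_, ?_⟩
  · obtain ⟨R, hR, hRsymm⟩ := hsymm hτ (hs.of_exponent_ge le_top)
    exact ⟨R, hR, hRsymm, hR.memℓp_columns hs⟩
  · exact ⟨_, hasRankOneAddDiagonalMatrix_rankOne_add_diagonalCLM ⟨τ, hτ⟩
      ⟨s, memℓp_infty_of_tendsto_cofinite hs⟩,
      (isCompactOperator_rankOne _ _).add (isCompactOperator_diagonalCLM _ hs)⟩
  · rintro (hs | ⟨-, hτ⟩) ⟨T, hT⟩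
    · exact hs hT.memℓp_infty
    · exact hτ hT.memℓp_two

end

/-- Proposition `nova` and surrounding remarks: properties of the operator
`R = τ⊗τ + diag(s)` on `ℓ²(ℕ)`, with matrix entries `⟨R e_i, e_j⟩ = τ_iτ_j` for `i ≠ j`
and `⟨R e_i, e_i⟩ = τ_i² + s_i`. -/
theorem stmt8 (τ s : ℕ → ℝ)
    (e : ℕ → lp (fun _ : ℕ => ℝ) 2) (he : ∀ i, e i = lp.single 2 i (1:ℝ)) :
    -- (i) Hilbert–Schmidt case
    ((Summable (fun i => τ i ^ 2) → Summable (fun i => s i ^ 2) →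
      ∃ R : lp (fun _ : ℕ => ℝ) 2 →L[ℝ] lp (fun _ : ℕ => ℝ) 2,
        (∀ i j, ⟪R (e i), e j⟫ = if i = j then τ i ^ 2 + s i else τ i * τ j) ∧
        (∀ x y, ⟪R x, y⟫ = ⟪x, R y⟫) ∧
        Summable (fun i => ‖R (e i)‖ ^ 2)) ∧
    -- (ii) bounded case
    ((Summable (fun i => τ i ^ 2) → BddAbove (Set.range fun i => |s i|) →
      ∃ R : lp (fun _ : ℕ => ℝ) 2 →L[ℝ] lp (fun _ : ℕ => ℝ) 2,
        (∀ i j, ⟪R (e i), e j⟫ = if i = j then τ i ^ 2 + s i else τ i * τ j) ∧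
        (∀ x y, ⟪R x, y⟫ = ⟪x, R y⟫))) ∧
    -- (iii) compact case
    ((Summable (fun i => τ i ^ 2) → Tendsto s atTop (nhds 0) →
      ∃ R : lp (fun _ : ℕ => ℝ) 2 →L[ℝ] lp (fun _ : ℕ => ℝ) 2,
        (∀ i j, ⟪R (e i), e j⟫ = if i = j then τ i ^ 2 + s i else τ i * τ j) ∧
        IsCompactOperator R)) ∧
    -- (iv) unbounded case
    ((¬ BddAbove (Set.range fun i => |s i|) ∨
        (BddAbove (Set.range fun i => |s i|) ∧ ¬ Summable (fun i => τ i ^ 2))) →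
      ¬ ∃ T : lp (fun _ : ℕ => ℝ) 2 →L[ℝ] lp (fun _ : ℕ => ℝ) 2,
        ∀ i j, ⟪T (e i), e j⟫ = if i = j then τ i ^ 2 + s i else τ i * τ j)) := by
  obtain rfl : e = fun i => lp.single 2 i (1 : ℝ) := funext he
  simpa only [hasRankOneAddDiagonalMatrix_iff_real_inner, Real.norm_eq_abs, sq_abs,
    Nat.cofinite_eq_atTop, IsSelfAdjoint.all, true_imp_iff, LinearMap.IsSymmetric,
    ContinuousLinearMap.coe_coe] using stmt8_general τ s
end

section
/- Let (λ_i)_{i≥1} be positive reals with ∑_i λ_i < ∞, and for each i define the symmetric probability density f_i(x) = (6/3⁶)·(1/λ_i²)·(27 λ_i^{3/2} − |x|³) for |x| ≤ 3 λ_i^{1/2} and f_i(x) = 0 otherwise. Let (x_i)_{i≥1} be real numbers with |x_i| < 3 λ_i^{1/2} for all i and ∑_i x_i²/λ_i³ < ∞. Then both ∑_i (f_i″(x_i)/f_i(x_i))² < ∞ and ∑_i (f_i′(x_i)/f_i(x_i))² < ∞ hold. -/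
open Filter Real Set

open Asymptotics
open scoped Topology

/-!
Inside its support each density is `c (r³ - |t|³)` with `r = 3√λ`, so its second derivative is
`-6 c |t|` and its first derivative is `t / 2` times the second one. As `λ` is bounded and
`x / r³ → 0`, also `x / r = r² (x / r³) → 0`; hence `r³ - |x|³` is comparable to `r³` and
`f″(x) / f(x) = O(x / r³)`, which is square summable. Since `x` is bounded,
`f′(x) / f(x) = (x / 2) (f″(x) / f(x))` is square summable too.
-/

lemma hasDerivAt_mul_abs (t : ℝ) : HasDerivAt (fun u : ℝ => u * |u|) (2 * |t|) t := by
  rcases eq_or_ne t 0 with rfl | ht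
  · rw [hasDerivAt_iff_tendsto_slope_zero]
    have h_abs : Tendsto (fun u : ℝ => |u|) (𝓝[≠] 0) (𝓝 (2 * |0|)) := by
      simpa using (continuous_abs.tendsto (0 : ℝ)).mono_left nhdsWithin_le_nhds
    refine h_abs.congr' ?_
    filter_upwards [self_mem_nhdsWithin] with u (hu : u ≠ 0)
    simp [hu]
  · refine ((hasDerivAt_id t).mul (hasDerivAt_abs ht)).congr_deriv ?_
    rw [id, self_mul_sign]
    ring

lemma hasDerivAt_abs_pow_three (t : ℝ) : HasDerivAt (fun u : ℝ => |u| ^ 3) (3 * (t * |t|)) t := by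
  have h_rpow := hasDerivAt_abs_rpow t (by norm_num : (1 : ℝ) < (3 : ℕ))
  simp only [rpow_natCast] at h_rpow
  refine h_rpow.congr_deriv ?_
  rw [show ((3 : ℕ) : ℝ) - 2 = 1 by norm_num, rpow_one]
  push_cast
  ring

/-- The function `c (r³ - |t|³)` cut off to zero outside `[-r, r]`. The density `f_i` is the case
`r = 3 √λ_i`, `c = 6 / (3⁶ λ_i²)`. -/
noncomputable def cubicBump (c r t : ℝ) : ℝ :=
  if |t| ≤ r then c * (r ^ 3 - |t| ^ 3) else 0

section Derivatives

variable {c r t : ℝ}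

lemma cubicBump_of_abs_le (ht : |t| ≤ r) : cubicBump c r t = c * (r ^ 3 - |t| ^ 3) :=
  if_pos ht

lemma eventually_abs_lt (ht : |t| < r) : ∀ᶠ u in 𝓝 t, |u| < r :=
  continuous_abs.continuousAt.eventually_lt_const ht

lemma deriv_cubicBump (ht : |t| < r) : deriv (cubicBump c r) t = -(3 * c * (t * |t|)) := by
  have h_eq : cubicBump c r =ᶠ[𝓝 t] fun u => c * (r ^ 3 - |u| ^ 3) :=
    (eventually_abs_lt ht).mono fun _ hu => cubicBump_of_abs_le hu.le
  rw [h_eq.deriv_eq, (((hasDerivAt_abs_pow_three t).const_sub (r ^ 3)).const_mul c).deriv]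
  ring

lemma iteratedDeriv_two_cubicBump (ht : |t| < r) :
    iteratedDeriv 2 (cubicBump c r) t = -(6 * c * |t|) := by
  have h_eq : deriv (cubicBump c r) =ᶠ[𝓝 t] fun u => -(3 * c * (u * |u|)) :=
    (eventually_abs_lt ht).mono fun _ hu => deriv_cubicBump hu
  rw [iteratedDeriv_succ, iteratedDeriv_one, h_eq.deriv_eq,
    ((hasDerivAt_mul_abs t).const_mul (3 * c)).fun_neg.deriv]
  ring

lemma deriv_cubicBump_eq_mul_iteratedDeriv_two (ht : |t| < r) :
    deriv (cubicBump c r) t = t / 2 * iteratedDeriv 2 (cubicBump c r) t := by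
  rw [deriv_cubicBump ht, iteratedDeriv_two_cubicBump ht]
  ring

lemma abs_iteratedDeriv_two_div_cubicBump_le (hc : c ≠ 0) (hr : 0 < r) (ht : |t| ≤ r / 2) :
    |iteratedDeriv 2 (cubicBump c r) t / cubicBump c r t| ≤ 48 / 7 * |t / r ^ 3| := by
  have h_cube : |t| ^ 3 ≤ r ^ 3 / 8 := by
    calc |t| ^ 3 ≤ (r / 2) ^ 3 := by gcongr
      _ = r ^ 3 / 8 := by ring
  have h_denom : 7 / 8 * r ^ 3 ≤ r ^ 3 - |t| ^ 3 := by linarith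
  have h_pos : 0 < r ^ 3 - |t| ^ 3 := lt_of_lt_of_le (by positivity) h_denom
  rw [iteratedDeriv_two_cubicBump (by linarith), cubicBump_of_abs_le (by linarith)]
  calc |-(6 * c * |t|) / (c * (r ^ 3 - |t| ^ 3))|
      = 6 * |t| / (r ^ 3 - |t| ^ 3) := by
        rw [abs_div, abs_neg, abs_mul, abs_mul, abs_mul, abs_abs, abs_of_pos h_pos,
          abs_of_pos (by norm_num : (0 : ℝ) < 6)]
        field_simp
    _ ≤ 6 * |t| / (7 / 8 * r ^ 3) := by gcongr
    _ = 48 / 7 * |t / r ^ 3| := by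
        rw [abs_div, abs_of_pos (pow_pos hr 3)]
        ring

end Derivatives

section Asymptotics

variable {ι : Type*} {l : Filter ι} {c r x : ι → ℝ}

lemma tendsto_div_zero_of_isBigO_one (hr : ∀ i, r i ≠ 0) (hr_bdd : r =O[l] (1 : ι → ℝ))
    (hx : Tendsto (fun i => x i / r i ^ 3) l (𝓝 0)) :
    Tendsto (fun i => x i / r i) l (𝓝 0) := by
  have h_eq : (fun i => x i / r i) = fun i => r i ^ 2 * (x i / r i ^ 3) := by
    funext i
    have := hr i
    field_simp
  have h_sq : (fun i => r i ^ 2) =O[l] fun _ => (1 : ℝ) := by simpa using hr_bdd.pow 2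
  have h_mul := h_sq.mul_isLittleO ((isLittleO_one_iff ℝ).2 hx)
  rw [h_eq]
  exact (isLittleO_one_iff ℝ).1 (by simpa only [one_mul] using h_mul)

lemma isBigO_iteratedDeriv_two_div_cubicBump (hc : ∀ i, c i ≠ 0) (hr : ∀ i, 0 < r i)
    (hx : Tendsto (fun i => x i / r i) l (𝓝 0)) :
    (fun i => iteratedDeriv 2 (cubicBump (c i) (r i)) (x i) / cubicBump (c i) (r i) (x i))
      =O[l] fun i => x i / r i ^ 3 := by
  refine IsBigO.of_bound (48 / 7) ?_
  have h_small : ∀ᶠ i in l, |x i / r i| < 1 / 2 :=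
    (tendsto_zero_iff_abs_tendsto_zero _).1 hx |>.eventually_lt_const (by norm_num)
  filter_upwards [h_small] with i hi
  rw [abs_div, abs_of_pos (hr i), div_lt_iff₀ (hr i)] at hi
  exact abs_iteratedDeriv_two_div_cubicBump_le (hc i) (hr i) (by linarith)

lemma isBigO_deriv_div_cubicBump (hr_bdd : r =O[l] (1 : ι → ℝ)) (hx : ∀ i, |x i| < r i) :
    (fun i => deriv (cubicBump (c i) (r i)) (x i) / cubicBump (c i) (r i) (x i))
      =O[l] fun i =>
        iteratedDeriv 2 (cubicBump (c i) (r i)) (x i) / cubicBump (c i) (r i) (x i) := by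
  have h_half : (fun i => x i / 2) =O[l] fun _ => (1 : ℝ) := by
    refine IsBigO.trans (IsBigO.of_bound' (Eventually.of_forall fun i => ?_)) hr_bdd
    rw [norm_eq_abs, norm_eq_abs, abs_div, abs_two]
    linarith [hx i, le_abs_self (r i), abs_nonneg (x i)]
  simpa only [deriv_cubicBump_eq_mul_iteratedDeriv_two (hx _), mul_div_assoc, one_mul] using
    h_half.mul (isBigO_refl _ l)

end Asymptotics

lemma summable_sq_deriv_ratios_cubicBump {ι : Type*} {c r x : ι → ℝ} (hc : ∀ i, c i ≠ 0)
    (hr_bdd : r =O[cofinite] (1 : ι → ℝ)) (hx : ∀ i, |x i| < r i)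
    (hxs : Summable fun i => (x i / r i ^ 3) ^ 2) :
    Summable (fun i =>
      (iteratedDeriv 2 (cubicBump (c i) (r i)) (x i) / cubicBump (c i) (r i) (x i)) ^ 2) ∧
    Summable (fun i =>
      (deriv (cubicBump (c i) (r i)) (x i) / cubicBump (c i) (r i) (x i)) ^ 2) := by
  have hr : ∀ i, 0 < r i := fun i => (abs_nonneg _).trans_lt (hx i)
  have h_cube : Tendsto (fun i => x i / r i ^ 3) cofinite (𝓝 0) :=
    (tendsto_zero_iff_abs_tendsto_zero _).2 <| by
      simpa only [Function.comp_def, sqrt_sq_eq_abs, sqrt_zero] using hxs.tendsto_cofinite_zero.sqrt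
  have h_second := isBigO_iteratedDeriv_two_div_cubicBump hc hr
    (tendsto_div_zero_of_isBigO_one (fun i => (hr i).ne') hr_bdd h_cube)
  have h_first := (isBigO_deriv_div_cubicBump (c := c) hr_bdd hx).trans h_second
  exact ⟨summable_of_isBigO hxs (h_second.pow 2), summable_of_isBigO hxs (h_first.pow 2)⟩

lemma three_mul_sqrt_pow_three {a : ℝ} (ha : 0 ≤ a) : (3 * √a) ^ 3 = 27 * (a * √a) := by
  rw [mul_pow, pow_succ √a, sq_sqrt ha]
  norm_num

lemma isBigO_three_mul_sqrt_one {ι : Type*} {l : Filter ι} {a : ι → ℝ}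
    (ha : BddAbove (range a)) : (fun i => 3 * √(a i)) =O[l] (1 : ι → ℝ) := by
  obtain ⟨M, hM⟩ := ha
  refine IsBigO.of_bound (3 * √M) (Eventually.of_forall fun i => ?_)
  rw [norm_of_nonneg (by positivity), Pi.one_apply, norm_one, mul_one]
  gcongr
  exact hM (mem_range_self i)

theorem stmt10_general {ι : Type*} (lam x : ι → ℝ) (hbdd : BddAbove (range lam))
    (f : ι → ℝ → ℝ)
    (hf : ∀ i t, f i t = if |t| ≤ 3 * √(lam i) then
        (6 / 3 ^ 6) * (1 / lam i ^ 2) * (27 * (lam i * √(lam i)) - |t| ^ 3) else 0)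
    (hx : ∀ i, |x i| < 3 * √(lam i))
    (hxs : Summable fun i => x i ^ 2 / lam i ^ 3) :
    Summable (fun i => (iteratedDeriv 2 (f i) (x i) / f i (x i)) ^ 2) ∧
    Summable (fun i => (deriv (f i) (x i) / f i (x i)) ^ 2) := by
  have hpos : ∀ i, 0 < lam i := fun i => by
    have : 0 < √(lam i) := by linarith [hx i, abs_nonneg (x i)]
    exact sqrt_pos.1 this
  obtain rfl : f = fun i => cubicBump (6 / 3 ^ 6 * (1 / lam i ^ 2)) (3 * √(lam i)) := by
    funext i t
    rw [hf, cubicBump, three_mul_sqrt_pow_three (hpos i).le]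
  refine summable_sq_deriv_ratios_cubicBump (fun i => ?_) (isBigO_three_mul_sqrt_one hbdd) hx ?_
  · have := hpos i
    positivity
  · refine (hxs.div_const (27 ^ 2)).congr fun i => ?_
    rw [three_mul_sqrt_pow_three (hpos i).le, div_pow, mul_pow, mul_pow, sq_sqrt (hpos i).le]
    ring

/-- for the densities
`f_i(x) = (6/3⁶)(1/λ_i²)(27λ_i^{3/2} − |x|³) 1{|x| ≤ 3λ_i^{1/2}}` and points `x_i` with
`|x_i| < 3√λ_i` and `∑ x_i²/λ_i³ < ∞`, both `∑ (f_i″(x_i)/f_i(x_i))² < ∞` and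
`∑ (f_i′(x_i)/f_i(x_i))² < ∞` hold. -/
theorem stmt10 (lam x : ℕ → ℝ) (hpos : ∀ i, 0 < lam i) (hsum : Summable lam)
    (f : ℕ → ℝ → ℝ)
    (hf : ∀ i t, f i t = if |t| ≤ 3 * Real.sqrt (lam i) then
        (6 / 3^6) * (1 / (lam i)^2) * (27 * (lam i * Real.sqrt (lam i)) - |t|^3) else 0)
    (hx : ∀ i, |x i| < 3 * Real.sqrt (lam i))
    (hxs : Summable fun i => (x i)^2 / (lam i)^3) :
    Summable (fun i => (iteratedDeriv 2 (f i) (x i) / f i (x i))^2) ∧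
    Summable (fun i => (deriv (f i) (x i) / f i (x i))^2) := by
  exact stmt10_general lam x hsum.tendsto_atTop_zero.bddAbove_range f hf hx hxs
end

section
/- Let Y be a nonnegative real random variable whose cumulative distribution function F(h) = P(Y ≤ h) satisfies F(h) > 0 for all h > 0 and belongs to the class Γ at 0 with auxiliary function ρ, where ρ is nondecreasing near 0 and ρ(s)/s → 0 as s → 0⁺. Let the kernel K : [0,∞) → [0,∞) be bounded, supported on [0,1], continuously differentiable on [0,1] with bounded derivative, and K(1) > 0. Define v(h) = E[K(Y/h)·Y·ρ(Y)]. Then v(h)/E[K(Y/h)·Y²] → 0 as h → 0⁺. -/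
open MeasureTheory Filter Real Set

/-!
The weight `K (Y / h)` only sees the event `0 ≤ Y ≤ h`, and there `Y * ρ Y ≤ c * Y ^ 2` for any
given `c > 0` once `h` is small; integrating this inequality against the weight gives the claim.
The comparison is phrased as a little-o of integrals, so that nothing rests on the value of `0 / 0`.
-/

section

open Asymptotics Topology

variable {Ω E : Type*} [MeasurableSpace Ω] [NormedAddCommGroup E] {μ : Measure Ω}

theorem isLittleO_integral_smul_of_concentrating [NormedSpace ℝ E] {ι : Type*} {l : Filter ι}
    {m : Filter Ω} {w : ι → Ω → ℝ} {f : Ω → E} {g : Ω → ℝ} (hfg : f =o[m] g) (hg : 0 ≤ᵐ[μ] g)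
    (hw : ∀ᶠ i in l, 0 ≤ᵐ[μ] w i)
    (hwm : ∀ s ∈ m, ∀ᶠ i in l, ∀ᵐ ω ∂μ, w i ω ≠ 0 → ω ∈ s)
    (hint : ∀ᶠ i in l, Integrable (fun ω => w i ω * g ω) μ) :
    (fun i => ∫ ω, w i ω • f ω ∂μ) =o[l] fun i => ∫ ω, w i ω * g ω ∂μ := by
  refine isLittleO_iff.2 fun c hc => ?_
  filter_upwards [hw, hint, hwm _ (hfg.bound hc)] with i hwi hinti hmem
  have weighted_bound : ∀ᵐ ω ∂μ, ‖w i ω • f ω‖ ≤ c * (w i ω * g ω) := by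
    filter_upwards [hg, hwi, hmem] with ω hgω hwω hfω
    rcases eq_or_ne (w i ω) 0 with hzero | hne
    · simp [hzero]
    · calc ‖w i ω • f ω‖ = w i ω * ‖f ω‖ := by rw [norm_smul, norm_of_nonneg hwω]
        _ ≤ w i ω * (c * ‖g ω‖) := mul_le_mul_of_nonneg_left (hfω hne) hwω
        _ = c * (w i ω * g ω) := by rw [norm_of_nonneg hgω, mul_left_comm]
  calc ‖∫ ω, w i ω • f ω ∂μ‖ ≤ ∫ ω, c * (w i ω * g ω) ∂μ :=
        norm_integral_le_of_norm_le (hinti.const_mul c) weighted_bound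
    _ = c * ∫ ω, w i ω * g ω ∂μ := integral_const_mul _ _
    _ ≤ c * ‖∫ ω, w i ω * g ω ∂μ‖ := mul_le_mul_of_nonneg_left (le_norm_self _) hc.le

theorem integrable_comp_of_continuousOn_Icc {Y : Ω → ℝ} [IsFiniteMeasureOnCompacts (μ.map Y)]
    (hY : AEMeasurable Y μ) {u : ℝ → E} {a b : ℝ} (hu : ContinuousOn u (Icc a b))
    (ha : ∀ᵐ ω ∂μ, a ≤ Y ω) (hb : ∀ y, b < y → u y = 0) :
    Integrable (fun ω => u (Y ω)) μ := by
  have law_ge : ∀ᵐ y ∂μ.map Y, a ≤ y := (ae_map_iff hY measurableSet_Ici).2 ha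
  have zero_off_Icc : ∀ᵐ y ∂μ.map Y, y ∉ Icc a b → u y = 0 := by
    filter_upwards [law_ge] with y hay hy
    exact hb y (not_le.1 fun hyb => hy ⟨hay, hyb⟩)
  exact (hu.integrableOn_Icc.integrable_of_ae_notMem_eq_zero zero_off_Icc).comp_aemeasurable hY

theorem eventually_ae_mem_of_kernel_ne_zero {Y : Ω → ℝ} (hY : 0 ≤ᵐ[μ] Y) {K : ℝ → ℝ}
    (hK_supp : ∀ s, 1 < s → K s = 0) {s : Set Ω} (hs : s ∈ comap Y (𝓝[≥] 0)) :
    ∀ᶠ h in 𝓝[>] 0, ∀ᵐ ω ∂μ, K (Y ω / h) ≠ 0 → ω ∈ s := by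
  obtain ⟨t, ht, hts⟩ := hs
  obtain ⟨δ, hδ, hδt⟩ := mem_nhdsGE_iff_exists_Ico_subset.1 ht
  filter_upwards [Ioo_mem_nhdsGT hδ] with h ⟨hpos, hlt⟩
  filter_upwards [hY] with ω hYω hKω
  have hle : Y ω ≤ h := (div_le_one hpos).1 (not_lt.1 (mt (hK_supp _) hKω))
  exact hts (hδt ⟨hYω, hle.trans_lt hlt⟩)

theorem integrable_kernel_mul {Y : Ω → ℝ} [IsFiniteMeasureOnCompacts (μ.map Y)]
    (hY : AEMeasurable Y μ) (hY_nonneg : 0 ≤ᵐ[μ] Y) {K g : ℝ → ℝ}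
    (hK : ContinuousOn K (Icc 0 1)) (hK_supp : ∀ s, 1 < s → K s = 0)
    (hg : ContinuousOn g (Ici 0)) {h : ℝ} (hh : 0 < h) :
    Integrable (fun ω => K (Y ω / h) * g (Y ω)) μ := by
  have maps_div : MapsTo (· / h) (Icc 0 h) (Icc 0 1) := fun y hy =>
    ⟨div_nonneg hy.1 hh.le, (div_le_one hh).2 hy.2⟩
  have hcont : ContinuousOn (fun y => K (y / h) * g y) (Icc 0 h) :=
    (hK.comp (continuousOn_id.div_const h) maps_div).mul (hg.mono Icc_subset_Ici_self)
  refine integrable_comp_of_continuousOn_Icc hY hcont hY_nonneg fun y hy => ?_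
  rw [hK_supp _ ((one_lt_div hh).2 hy), zero_mul]

theorem isLittleO_integral_kernel_smul [NormedSpace ℝ E] {Y : Ω → ℝ}
    [IsFiniteMeasureOnCompacts (μ.map Y)] (hY : AEMeasurable Y μ) (hY_nonneg : 0 ≤ᵐ[μ] Y)
    {K g : ℝ → ℝ} {f : ℝ → E} (hK_nonneg : ∀ s, 0 ≤ s → 0 ≤ K s)
    (hK_supp : ∀ s, 1 < s → K s = 0) (hK : ContinuousOn K (Icc 0 1))
    (hg_nonneg : ∀ s, 0 ≤ s → 0 ≤ g s) (hg : ContinuousOn g (Ici 0)) (hfg : f =o[𝓝[≥] 0] g) :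
    (fun h => ∫ ω, K (Y ω / h) • f (Y ω) ∂μ) =o[𝓝[>] 0]
      fun h => ∫ ω, K (Y ω / h) * g (Y ω) ∂μ := by
  refine isLittleO_integral_smul_of_concentrating (hfg.comp_tendsto tendsto_comap)
    (hY_nonneg.mono fun ω => hg_nonneg (Y ω)) ?_
    (fun s => eventually_ae_mem_of_kernel_ne_zero hY_nonneg hK_supp) ?_
  · filter_upwards [self_mem_nhdsWithin] with h hh
    exact hY_nonneg.mono fun ω hYω => hK_nonneg _ (div_nonneg hYω (le_of_lt hh))
  · filter_upwards [self_mem_nhdsWithin] with h hh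
    exact integrable_kernel_mul hY hY_nonneg hK hK_supp hg hh

theorem isLittleO_mul_sq_of_tendsto_div {ρ : ℝ → ℝ}
    (hρ : Tendsto (fun s => ρ s / s) (𝓝[>] 0) (𝓝 0)) :
    (fun s => s * ρ s) =o[𝓝[≥] 0] fun s => s ^ 2 := by
  have hρ_id : ρ =o[𝓝[>] 0] fun s => s :=
    (isLittleO_iff_tendsto' (eventually_mem_nhdsWithin.mono fun _ hs h0 =>
      absurd h0 (ne_of_gt hs))).2 hρ
  have punctured : (fun s => s * ρ s) =o[𝓝[>] 0] fun s => s ^ 2 := by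
    simpa only [sq] using (isBigO_refl (fun s : ℝ => s) _).mul_isLittleO hρ_id
  rw [← Ioi_insert, isLittleO_insert (zero_mul _)]
  exact punctured

theorem stmt11_general {Y : Ω → ℝ} [IsFiniteMeasureOnCompacts (μ.map Y)]
    (hY : AEMeasurable Y μ) (hY_nonneg : 0 ≤ᵐ[μ] Y) {ρ K : ℝ → ℝ}
    (hρ : Tendsto (fun s => ρ s / s) (𝓝[>] 0) (𝓝 0)) (hK_nonneg : ∀ s, 0 ≤ s → 0 ≤ K s)
    (hK_supp : ∀ s, 1 < s → K s = 0) (hK : ContinuousOn K (Icc 0 1)) :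
    (fun h => ∫ ω, K (Y ω / h) * Y ω * ρ (Y ω) ∂μ) =o[𝓝[>] 0]
      fun h => ∫ ω, K (Y ω / h) * Y ω ^ 2 ∂μ := by
  simpa only [smul_eq_mul, mul_assoc] using
    isLittleO_integral_kernel_smul hY hY_nonneg hK_nonneg hK_supp hK (fun s _ => sq_nonneg s)
      (continuousOn_pow 2) (isLittleO_mul_sq_of_tendsto_div hρ)

end

/-- first part of Proposition `Compay`: with
`v(h) = E[K(Y/h)·Y·ρ(Y)]`, one has `v(h)/E[K(Y/h)·Y²] → 0` as `h → 0⁺`. -/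
theorem stmt11 {Ω : Type*} [MeasurableSpace Ω] (P : Measure Ω) [IsProbabilityMeasure P]
    (Y : Ω → ℝ) (hYmeas : Measurable Y) (hYnonneg : ∀ ω, 0 ≤ Y ω)
    (F ρ : ℝ → ℝ) (hF : ∀ h, F h = (P {ω | Y ω ≤ h}).toReal)
    (hFpos : ∀ h, 0 < h → 0 < F h)
    (hρmeas : Measurable ρ) (hρpos : ∀ s, 0 < s → 0 < ρ s)
    (hρmono : ∃ δ > 0, MonotoneOn ρ (Set.Ioc 0 δ))
    (hρ0 : Tendsto (fun s => ρ s / s) (nhdsWithin 0 (Set.Ioi 0)) (nhds 0))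
    (hΓ : ∀ x : ℝ, Tendsto (fun h => F (h + ρ h * x) / F h) (nhdsWithin 0 (Set.Ioi 0))
      (nhds (Real.exp x)))
    (K : ℝ → ℝ) (hK_nonneg : ∀ s, 0 ≤ K s) (hK_bdd : ∃ M, ∀ s, K s ≤ M)
    (hK_supp : ∀ s, 1 < s → K s = 0)
    (hK_C1 : ContDiffOn ℝ 1 K (Set.Icc 0 1))
    (hK_deriv_bdd : ∃ M, ∀ s ∈ Set.Icc (0:ℝ) 1, |derivWithin K (Set.Icc 0 1) s| ≤ M)
    (hK1 : 0 < K 1) :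
    Tendsto (fun h =>
        (∫ ω, K (Y ω / h) * Y ω * ρ (Y ω) ∂P) / (∫ ω, K (Y ω / h) * (Y ω)^2 ∂P))
      (nhdsWithin 0 (Set.Ioi 0)) (nhds 0) :=
  (stmt11_general hYmeas.aemeasurable (.of_forall hYnonneg) hρ0 (fun s _ => hK_nonneg s) hK_supp
    hK_C1.continuousOn).tendsto_div_nhds_zero
end

section
/- Let Y be a nonnegative real random variable whose cumulative distribution function F(h) = P(Y ≤ h) satisfies F(h) > 0 for all h > 0 and F(hs)/F(h) → 0 as h → 0⁺ for every fixed s ∈ [0,1) (which holds in particular when F belongs to the class Γ at 0). Let the kernel K : [0,∞) → [0,∞) be bounded, supported on [0,1], continuously differentiable on [0,1] with bounded derivative, and K(1) > 0. Then for all integers m ≥ 1 and p ≥ 0, E[K(Y/h)^m · Y^p] ∼ K(1)^m · h^p · F(h) as h → 0⁺, i.e. the ratio of the two sides tends to 1. -/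
open MeasureTheory Filter Real Set

/-!
Condition on the event `{Y ≤ h}`. Rapid variation of the distribution function `F` says that
`P(Y ≤ h s | Y ≤ h) = F (h s) / F h → 0` for `s < 1`, so under the conditional law the ratio `Y / h`
concentrates at `1`, and bounded functions of it which are left-continuous at `1` average to their
value there. Since `K (Y / h)` vanishes off `{Y ≤ h}`, the moment `E[K (Y / h) ^ m * Y ^ p]` equals
`h ^ p * F h` times the conditional mean of `K t ^ m * t ^ p` at `t = Y / h`.
-/

section

open ProbabilityTheory
open scoped Topology

/-- Rapid variation (of index `+∞`) at `0` from the right, the property of distribution functions of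
class Γ that concentrates the mass of `{Y ≤ h}` near `Y = h`. Positivity of `F` is not part of the
definition: where `F h = 0` the quotient is `0` by convention. -/
def IsRapidlyVaryingAtZero (F : ℝ → ℝ) : Prop :=
  ∀ s : ℝ, 0 ≤ s → s < 1 → Tendsto (fun h => F (h * s) / F h) (𝓝[>] 0) (𝓝 0)

variable {Ω ι E : Type*} [MeasurableSpace Ω] [NormedAddCommGroup E] [NormedSpace ℝ E]

theorem norm_integral_le_add_mul_measureReal_lt_norm {μ : Measure Ω} [IsFiniteMeasure μ]
    {f : Ω → E} {C ε : ℝ} (hε : 0 ≤ ε) (hf : AEStronglyMeasurable f μ)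
    (hC : ∀ᵐ ω ∂μ, ‖f ω‖ ≤ C) :
    ‖∫ ω, f ω ∂μ‖ ≤ μ.real univ * ε + μ.real {ω | ε < ‖f ω‖} * C := by
  set A := {ω | ε < ‖f ω‖}
  have hA : NullMeasurableSet A μ := nullMeasurableSet_lt aemeasurable_const hf.norm.aemeasurable
  have hint : Integrable (A.indicator fun _ => C) μ := (integrable_const C).indicator₀ hA
  calc ‖∫ ω, f ω ∂μ‖ ≤ ∫ ω, (ε + A.indicator (fun _ => C) ω) ∂μ := by
        refine norm_integral_le_of_norm_le ((integrable_const ε).add hint) ?_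
        filter_upwards [hC] with ω hω
        by_cases hωA : ω ∈ A
        · rw [indicator_of_mem hωA]
          linarith
        · rw [indicator_of_notMem hωA, add_zero]
          exact not_lt.1 hωA
    _ = μ.real univ * ε + μ.real A * C := by
        rw [integral_add (integrable_const ε) hint, integral_indicator₀ hA, integral_const,
          setIntegral_const, smul_eq_mul, smul_eq_mul]

theorem tendsto_integral_of_tendsto_measureReal_lt_norm_sub [CompleteSpace E] {l : Filter ι}
    {μ : ι → Measure Ω} {f : ι → Ω → E} {a : E} {C : ℝ}
    (hμ : ∀ᶠ i in l, IsProbabilityMeasure (μ i))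
    (hf : ∀ᶠ i in l, AEStronglyMeasurable (f i) (μ i))
    (hC : ∀ᶠ i in l, ∀ᵐ ω ∂μ i, ‖f i ω‖ ≤ C)
    (hlim : ∀ ε > 0, Tendsto (fun i => (μ i).real {ω | ε < ‖f i ω - a‖}) l (𝓝 0)) :
    Tendsto (fun i => ∫ ω, f i ω ∂μ i) l (𝓝 a) := by
  rw [Metric.tendsto_nhds]
  intro ε hε
  have hsmall : ∀ᶠ i in l, (μ i).real {ω | ε / 2 < ‖f i ω - a‖} * (C + ‖a‖) < ε / 2 := by
    have := (hlim (ε / 2) (half_pos hε)).mul_const (C + ‖a‖)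
    rw [zero_mul] at this
    exact this.eventually_lt_const (half_pos hε)
  filter_upwards [hμ, hf, hC, hsmall] with i hμi hfi hCi hsmalli
  have hsub : ∫ ω, f i ω ∂μ i - a = ∫ ω, (f i ω - a) ∂μ i := by
    rw [integral_sub (Integrable.of_bound hfi C hCi) (integrable_const a), integral_const,
      probReal_univ, one_smul]
  have hbound : ∀ᵐ ω ∂μ i, ‖f i ω - a‖ ≤ C + ‖a‖ := by
    filter_upwards [hCi] with ω hω
    exact (norm_sub_le _ _).trans (add_le_add_left hω _)
  have hmeas : AEStronglyMeasurable (fun ω => f i ω - a) (μ i) := hfi.sub aestronglyMeasurable_const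
  calc dist (∫ ω, f i ω ∂μ i) a = ‖∫ ω, (f i ω - a) ∂μ i‖ := by rw [dist_eq_norm, hsub]
    _ ≤ (μ i).real univ * (ε / 2) + (μ i).real {ω | ε / 2 < ‖f i ω - a‖} * (C + ‖a‖) :=
      norm_integral_le_add_mul_measureReal_lt_norm (half_pos hε).le hmeas hbound
    _ < ε := by
      rw [probReal_univ]
      linarith

theorem integral_eq_measureReal_smul_integral_cond {μ : Measure Ω} {s : Set Ω} {f : Ω → E}
    (hs : μ.real s ≠ 0) (hf : ∀ ω ∉ s, f ω = 0) :
    ∫ ω, f ω ∂μ = μ.real s • ∫ ω, f ω ∂μ[|s] := by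
  rw [ProbabilityTheory.cond, integral_smul_measure, ENNReal.toReal_inv, ← measureReal_def,
    smul_inv_smul₀ hs, setIntegral_eq_integral_of_forall_compl_eq_zero hf]

theorem aestronglyMeasurable_comp_of_ae_mem {α β : Type*} [MeasurableSpace α] [TopologicalSpace β]
    {μ : Measure Ω} {s : Set α} (hs : MeasurableSet s) {φ : α → β}
    (hφ : StronglyMeasurable (s.domRestrict φ)) {g : Ω → α} (hg : Measurable g)
    (hgs : ∀ᵐ ω ∂μ, g ω ∈ s) :
    AEStronglyMeasurable (fun ω => φ (g ω)) μ := by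
  obtain ⟨ψ, hψ, hψφ⟩ :=
    (MeasurableEmbedding.subtype_coe hs).exists_stronglyMeasurable_extend hφ fun x => ⟨φ x⟩
  refine ⟨_, hψ.comp_measurable hg, ?_⟩
  filter_upwards [hgs] with ω hω
  exact (congrFun hψφ ⟨g ω, hω⟩).symm

variable {P : Measure Ω} {Y : Ω → ℝ}

theorem tendsto_cond_div_notMem (hY : Measurable Y)
    (hpos : ∀ h, 0 < h → 0 < P.real (Y ⁻¹' Iic h))
    (hF : IsRapidlyVaryingAtZero fun h => P.real (Y ⁻¹' Iic h)) {u : Set ℝ} (hu : u ∈ 𝓝[≤] 1) :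
    Tendsto (fun h => P[|Y in Iic h].real {ω | Y ω / h ∉ u}) (𝓝[>] 0) (𝓝 0) := by
  obtain ⟨s, ⟨hs0, hs1⟩, hsu⟩ := (mem_nhdsLE_iff_exists_mem_Ico_Ioc_subset one_pos).1 hu
  refine squeeze_zero' (.of_forall fun _ => measureReal_nonneg) ?_ (hF s hs0 hs1)
  filter_upwards [self_mem_nhdsWithin] with h (hh : 0 < h)
  have hsub : Y ⁻¹' Iic h ∩ {ω | Y ω / h ∉ u} ⊆ Y ⁻¹' Iic (h * s) := by
    rintro ω ⟨hωh : Y ω ≤ h, hωu⟩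
    by_contra hωs
    have : h * s < Y ω := not_le.1 hωs
    exact hωu (hsu ⟨(lt_div_iff₀' hh).2 this, (div_le_one hh).2 hωh⟩)
  have hsh : h * s ≤ h := mul_le_of_le_one_right hh.le hs1.le
  have hfin : P (Y ⁻¹' Iic (h * s)) ≠ ⊤ :=
    measure_ne_top_of_subset (preimage_mono (Iic_subset_Iic.2 hsh))
      (ENNReal.toReal_pos_iff.1 (hpos h hh)).2.ne
  calc P[|Y in Iic h].real {ω | Y ω / h ∉ u}
      = P.real (Y ⁻¹' Iic h ∩ {ω | Y ω / h ∉ u}) / P.real (Y ⁻¹' Iic h) := by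
        rw [measureReal_def, cond_apply (hY measurableSet_Iic), ENNReal.toReal_mul,
          ENNReal.toReal_inv, inv_mul_eq_div, measureReal_def, measureReal_def]
    _ ≤ P.real (Y ⁻¹' Iic (h * s)) / P.real (Y ⁻¹' Iic h) := by gcongr

theorem ae_cond_div_mem_Icc (hY : Measurable Y) (hY0 : ∀ ω, 0 ≤ Y ω) {h : ℝ} (hh : 0 < h) :
    ∀ᵐ ω ∂P[|Y in Iic h], Y ω / h ∈ Icc (0 : ℝ) 1 :=
  ae_cond_of_forall_mem (hY measurableSet_Iic) fun ω hω =>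
    ⟨div_nonneg (hY0 ω) hh.le, (div_le_one hh).2 hω⟩

theorem tendsto_integral_cond_comp_div [CompleteSpace E] (hY : Measurable Y) (hY0 : ∀ ω, 0 ≤ Y ω)
    (hpos : ∀ h, 0 < h → 0 < P.real (Y ⁻¹' Iic h))
    (hF : IsRapidlyVaryingAtZero fun h => P.real (Y ⁻¹' Iic h))
    {φ : ℝ → E} {a : E} {C : ℝ} (hφ : StronglyMeasurable ((Icc 0 1).domRestrict φ))
    (hC : ∀ t ∈ Icc (0 : ℝ) 1, ‖φ t‖ ≤ C) (ha : Tendsto φ (𝓝[≤] 1) (𝓝 a)) :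
    Tendsto (fun h => ∫ ω, φ (Y ω / h) ∂P[|Y in Iic h]) (𝓝[>] 0) (𝓝 a) := by
  have hmem : ∀ᶠ h in 𝓝[>] 0, ∀ᵐ ω ∂P[|Y in Iic h], Y ω / h ∈ Icc (0 : ℝ) 1 := by
    filter_upwards [self_mem_nhdsWithin] with h hh using ae_cond_div_mem_Icc hY hY0 hh
  refine tendsto_integral_of_tendsto_measureReal_lt_norm_sub (C := C) ?_ ?_ ?_ fun ε hε => ?_
  · filter_upwards [self_mem_nhdsWithin] with h hh
    have hPh := ENNReal.toReal_pos_iff.1 (hpos h hh)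
    exact cond_isProbabilityMeasure_of_finite hPh.1.ne' hPh.2.ne
  · filter_upwards [hmem] with h hh
    exact aestronglyMeasurable_comp_of_ae_mem measurableSet_Icc hφ (hY.div_const h) hh
  · filter_upwards [hmem] with h hh
    filter_upwards [hh] with ω hω using hC _ hω
  · have hu : {t | ‖φ t - a‖ ≤ ε} ∈ 𝓝[≤] (1 : ℝ) :=
      (tendsto_iff_norm_sub_tendsto_zero.1 ha).eventually_le_const hε
    simpa only [mem_ofPred_eq, not_le] using tendsto_cond_div_notMem hY hpos hF hu

theorem integral_kernel_pow_mul_pow {K : ℝ → ℝ} (hK_supp : ∀ s, 1 < s → K s = 0) {m : ℕ}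
    (hm : m ≠ 0) (p : ℕ) {h : ℝ} (hh : 0 < h) (hne : P.real (Y ⁻¹' Iic h) ≠ 0) :
    ∫ ω, K (Y ω / h) ^ m * Y ω ^ p ∂P =
      h ^ p * P.real (Y ⁻¹' Iic h) *
        ∫ ω, K (Y ω / h) ^ m * (Y ω / h) ^ p ∂P[|Y in Iic h] := by
  have hvanish : ∀ ω ∉ Y ⁻¹' Iic h, K (Y ω / h) ^ m * (Y ω / h) ^ p = 0 := fun ω hω => by
    rw [hK_supp _ ((one_lt_div hh).2 (not_le.1 hω)), zero_pow hm, zero_mul]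
  have hscale : ∀ ω, K (Y ω / h) ^ m * Y ω ^ p =
      h ^ p * (K (Y ω / h) ^ m * (Y ω / h) ^ p) := fun ω => by
    rw [mul_left_comm, ← mul_pow, mul_div_cancel₀ _ hh.ne']
  simp_rw [hscale]
  rw [integral_const_mul, integral_eq_measureReal_smul_integral_cond hne hvanish, smul_eq_mul,
    mul_assoc]

theorem tendsto_integral_cond_kernel_pow_mul_pow (hY : Measurable Y) (hY0 : ∀ ω, 0 ≤ Y ω)
    (hpos : ∀ h, 0 < h → 0 < P.real (Y ⁻¹' Iic h))
    (hF : IsRapidlyVaryingAtZero fun h => P.real (Y ⁻¹' Iic h))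
    {K : ℝ → ℝ} {M : ℝ} (hK_meas : Measurable ((Icc (0 : ℝ) 1).domRestrict K))
    (hK_bdd : ∀ s ∈ Icc (0 : ℝ) 1, |K s| ≤ M) (hK_cont : ContinuousWithinAt K (Iic 1) 1)
    (m p : ℕ) :
    Tendsto (fun h => ∫ ω, K (Y ω / h) ^ m * (Y ω / h) ^ p ∂P[|Y in Iic h]) (𝓝[>] 0)
      (𝓝 (K 1 ^ m)) := by
  have hmeas : StronglyMeasurable ((Icc (0 : ℝ) 1).domRestrict fun t => K t ^ m * t ^ p) :=
    ((hK_meas.pow_const m).mul (measurable_subtype_coe.pow_const p)).stronglyMeasurable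
  have hbdd : ∀ t ∈ Icc (0 : ℝ) 1, ‖K t ^ m * t ^ p‖ ≤ M ^ m := fun t ht => by
    rw [norm_mul, norm_pow, norm_pow, norm_of_nonneg ht.1]
    exact (mul_le_of_le_one_right (by positivity) (pow_le_one₀ ht.1 ht.2)).trans
      (pow_le_pow_left₀ (norm_nonneg _) (hK_bdd t ht) m)
  have hcont : ContinuousWithinAt (fun t => K t ^ m * t ^ p) (Iic 1) 1 :=
    (hK_cont.pow m).mul (continuousWithinAt_id.pow p)
  refine tendsto_integral_cond_comp_div hY hY0 hpos hF hmeas hbdd ?_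
  simpa only [ContinuousWithinAt, one_pow, mul_one] using hcont

end

theorem stmt13_general {Ω : Type*} [MeasurableSpace Ω] (P : Measure Ω)
    (Y : Ω → ℝ) (hYmeas : Measurable Y) (hYnonneg : ∀ ω, 0 ≤ Y ω)
    (F : ℝ → ℝ) (hF : ∀ h, F h = P.real (Y ⁻¹' Iic h)) (hFpos : ∀ h, 0 < h → 0 < F h)
    (hF0 : IsRapidlyVaryingAtZero F)
    (K : ℝ → ℝ) (hK_meas : Measurable ((Icc (0 : ℝ) 1).domRestrict K))
    (hK_bdd : ∃ M, ∀ s ∈ Icc (0 : ℝ) 1, |K s| ≤ M) (hK_supp : ∀ s, 1 < s → K s = 0)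
    (hK_cont : ContinuousWithinAt K (Iic 1) 1) (hK1 : K 1 ≠ 0) (m : ℕ) (hm : m ≠ 0) (p : ℕ) :
    Tendsto (fun h => (∫ ω, K (Y ω / h) ^ m * Y ω ^ p ∂P) / (K 1 ^ m * h ^ p * F h))
      (nhdsWithin 0 (Ioi 0)) (nhds 1) := by
  obtain rfl : F = fun h => P.real (Y ⁻¹' Iic h) := funext hF
  obtain ⟨M, hM⟩ := hK_bdd
  have hmean := tendsto_integral_cond_kernel_pow_mul_pow hYmeas hYnonneg hFpos hF0 hK_meas hM
    hK_cont m p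
  have hratio := hmean.div_const (K 1 ^ m)
  rw [div_self (pow_ne_zero m hK1)] at hratio
  refine hratio.congr' ?_
  filter_upwards [self_mem_nhdsWithin] with h (hh : 0 < h)
  have hFh := (hFpos h hh).ne'
  rw [integral_kernel_pow_mul_pow hK_supp hm p hh hFh]
  field_simp

/-- Lemma `free`: if the c.d.f. `F` of `Y ≥ 0` satisfies `F(hs)/F(h) → 0`
for every fixed `s ∈ [0,1)`, then for all integers `m ≥ 1` and `p ≥ 0`,
`E[K(Y/h)^m · Y^p] ∼ K(1)^m · h^p · F(h)` as `h → 0⁺`. -/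
theorem stmt13 {Ω : Type*} [MeasurableSpace Ω] (P : Measure Ω) [IsProbabilityMeasure P]
    (Y : Ω → ℝ) (hYmeas : Measurable Y) (hYnonneg : ∀ ω, 0 ≤ Y ω)
    (F : ℝ → ℝ) (hF : ∀ h, F h = (P {ω | Y ω ≤ h}).toReal)
    (hFpos : ∀ h, 0 < h → 0 < F h)
    (hF0 : ∀ s : ℝ, 0 ≤ s → s < 1 →
      Tendsto (fun h => F (h * s) / F h) (nhdsWithin 0 (Set.Ioi 0)) (nhds 0))
    (K : ℝ → ℝ) (hK_nonneg : ∀ s, 0 ≤ K s) (hK_bdd : ∃ M, ∀ s, K s ≤ M)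
    (hK_supp : ∀ s, 1 < s → K s = 0)
    (hK_C1 : ContDiffOn ℝ 1 K (Set.Icc 0 1))
    (hK_deriv_bdd : ∃ M, ∀ s ∈ Set.Icc (0:ℝ) 1, |derivWithin K (Set.Icc 0 1) s| ≤ M)
    (hK1 : 0 < K 1) :
    ∀ m : ℕ, 1 ≤ m → ∀ p : ℕ,
      Tendsto (fun h =>
          (∫ ω, (K (Y ω / h)) ^ m * (Y ω) ^ p ∂P) / ((K 1) ^ m * h ^ p * F h))
        (nhdsWithin 0 (Set.Ioi 0)) (nhds 1) := by
  intro m hm p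
  have hK := hK_C1.continuousOn
  exact stmt13_general P Y hYmeas hYnonneg F hF hFpos hF0 K hK.domRestrict.measurable
    (isCompact_Icc.exists_bound_of_continuousOn hK) hK_supp
    (continuousWithinAt_Icc_iff_Iic one_pos |>.1 (hK 1 (right_mem_Icc.2 zero_le_one))) hK1.ne' m
    (Nat.one_le_iff_ne_zero.1 hm) p
end

section
/- Let (q_i)_{i≥1} be a family of probability densities such that each q_i admits near 0 the Γ-representation q_i(u) = c_i · exp(−∫_u^{u₀} ds/ρ(s)) for 0 < u ≤ u₀, with constants c_i > 0 and a common function ρ that is positive, continuous and nondecreasing on (0, u₀] with ρ(s)/s → 0 as s → 0⁺. For p ∈ ℕ and t > 0 set J_p^{(i)}(t) = ∫₀¹ (xᵖ/√(1−x²)) · q_i(t√(1−x²)) dx. Then there exist M < ∞ and t₁ > 0 such that for all 0 < t < t₁ and all i, (J₂^{(i)}(t)/J₀^{(i)}(t)) · (t/ρ(t)) ≤ M. -/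
open MeasureTheory Filter Real Set

/-!
A Γ-representation with nondecreasing `ρ` says that `u ↦ exp (-u / ρ t) * q u` is nondecreasing
on `(0, t]`. Put `a = t / ρ t` and substitute `x = sin θ`: the bound on the ratio of the moments
of order `p + 2` and `p` becomes the nonnegativity of the integral over `[0, π/2)` of
`(p + 1 - a * sin θ ^ 2) * sin θ ^ p * exp (a * cos θ)` times the nonincreasing function
`exp (-a * cos θ) * q (t * cos θ)`. The first factor changes sign at most once, from plus to minus,
so it is enough that its own integral is nonnegative; and it dominates the derivative of
`sin θ ^ (p + 1) * exp (a * cos θ)`, which integrates to `1`.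
-/

/-- The moment `J_p(t) = ∫₀¹ xᵖ / √(1 - x²) · q(t √(1 - x²)) dx` of a function `q`; the
integrand has the junk value `0` at `x = 1`, which does not affect the integral. -/
noncomputable def angularMoment (q : ℝ → ℝ) (p : ℕ) (t : ℝ) : ℝ :=
  ∫ x in (0 : ℝ)..1, x ^ p / √(1 - x ^ 2) * q (t * √(1 - x ^ 2))

theorem angularMoment_eq_integral_sin_pow (q : ℝ → ℝ) (p : ℕ) (t : ℝ) :
    angularMoment q p t = ∫ θ in (0 : ℝ)..π / 2, sin θ ^ p * q (t * cos θ) := by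
  have hsub : Icc 0 (π / 2) ⊆ Icc (-(π / 2)) (π / 2) :=
    Icc_subset_Icc_left (by linarith [pi_pos])
  have himage : sin '' Ioo 0 (π / 2) = Ioo 0 1 := by
    simpa only [sin_zero, sin_pi_div_two] using continuousOn_sin.image_Ioo_of_strictMonoOn
      pi_div_two_pos.le (strictMonoOn_sin.mono hsub)
  rw [angularMoment, intervalIntegral.integral_of_le zero_le_one,
    intervalIntegral.integral_of_le pi_div_two_pos.le, integral_Ioc_eq_integral_Ioo,
    integral_Ioc_eq_integral_Ioo, ← himage,
    integral_image_eq_integral_abs_deriv_smul measurableSet_Ioo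
      (fun θ _ => (hasDerivAt_sin θ).hasDerivWithinAt)
      (injOn_sin.mono (Ioo_subset_Icc_self.trans hsub))]
  refine setIntegral_congr_fun measurableSet_Ioo fun θ hθ => ?_
  have hcos : 0 < cos θ := cos_pos_of_mem_Ioo ⟨by linarith [hθ.1, pi_pos], hθ.2⟩
  simp only [smul_eq_mul, ← abs_cos_eq_sqrt_one_sub_sin_sq, abs_of_pos hcos]
  field_simp

theorem setIntegral_mul_nonneg_of_sign_change {α : Type*} [MeasurableSpace α] {μ : Measure α}
    {s : Set α} {f g : α → ℝ} (hs : MeasurableSet s) (hf : IntegrableOn f s μ)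
    (hfg : IntegrableOn (fun x => f x * g x) s μ) (hg : ∀ x ∈ s, 0 ≤ g x)
    (hbdd : BddAbove (g '' s)) (hsign : ∀ x ∈ s, ∀ y ∈ s, f x < 0 → 0 < f y → g x ≤ g y)
    (hint : 0 ≤ ∫ x in s, f x ∂μ) :
    0 ≤ ∫ x in s, f x * g x ∂μ := by
  -- `k` separates the values of `g` where `f < 0` from those where `f > 0`.
  set k : ℝ := sSup (insert 0 (g '' {x ∈ s | f x < 0}))
  have hbdd' : BddAbove (insert 0 (g '' {x ∈ s | f x < 0})) :=
    (hbdd.mono (image_mono (sep_subset _ _))).insert 0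
  have hk_nonneg : 0 ≤ k := le_csSup hbdd' (mem_insert _ _)
  have hpointwise : ∀ x ∈ s, k * f x ≤ f x * g x := by
    intro x hx
    rcases lt_trichotomy (f x) 0 with hfx | hfx | hfx
    · have : g x ≤ k := le_csSup hbdd' (mem_insert_of_mem _ ⟨x, ⟨hx, hfx⟩, rfl⟩)
      nlinarith
    · simp only [hfx, mul_zero, zero_mul, le_refl]
    · have : k ≤ g x := by
        refine csSup_le (insert_nonempty _ _) ?_
        rintro _ (rfl | ⟨y, ⟨hy, hfy⟩, rfl⟩)
        exacts [hg x hx, hsign y hy x hx hfy hfx]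
      nlinarith
  calc 0 ≤ k * ∫ x in s, f x ∂μ := mul_nonneg hk_nonneg hint
    _ = ∫ x in s, k * f x ∂μ := (integral_const_mul k f).symm
    _ ≤ ∫ x in s, f x * g x ∂μ := setIntegral_mono_on (hf.const_mul k) hfg hs hpointwise

theorem hasDerivAt_sin_pow_mul_exp_cos (a : ℝ) (p : ℕ) (θ : ℝ) :
    HasDerivAt (fun θ => sin θ ^ (p + 1) * exp (a * cos θ))
      (((p + 1) * cos θ - a * sin θ ^ 2) * sin θ ^ p * exp (a * cos θ)) θ := by
  refine (((hasDerivAt_sin θ).pow (p + 1)).mul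
    ((hasDerivAt_cos θ).const_mul a).exp).congr_deriv ?_
  simp only [Pi.pow_apply, Nat.add_sub_cancel]
  push_cast
  ring

theorem integral_sin_pow_mul_exp_cos_nonneg (a : ℝ) (p : ℕ) :
    0 ≤ ∫ θ in (0 : ℝ)..π / 2, (p + 1 - a * sin θ ^ 2) * sin θ ^ p * exp (a * cos θ) := by
  calc (0 : ℝ) ≤ 1 := zero_le_one
    _ = ∫ θ in (0 : ℝ)..π / 2,
          ((p + 1) * cos θ - a * sin θ ^ 2) * sin θ ^ p * exp (a * cos θ) := by
        rw [intervalIntegral.integral_eq_sub_of_hasDerivAt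
          (fun θ _ => hasDerivAt_sin_pow_mul_exp_cos a p θ)
          (Continuous.intervalIntegrable (by fun_prop) _ _)]
        simp
    _ ≤ _ := by
        refine intervalIntegral.integral_mono_on pi_div_two_pos.le
          (Continuous.intervalIntegrable (by fun_prop) _ _)
          (Continuous.intervalIntegrable (by fun_prop) _ _) fun θ hθ => ?_
        have hsin : 0 ≤ sin θ := sin_nonneg_of_mem_Icc ⟨hθ.1, by linarith [hθ.2, pi_pos]⟩
        have hcos : (p + 1 : ℝ) * cos θ ≤ p + 1 :=
          mul_le_of_le_one_right (by positivity) (cos_le_one θ)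
        gcongr

theorem le_of_sub_mul_sin_sq_neg_of_pos {a b θ φ : ℝ} (hb : 0 ≤ b) (hθ : θ ∈ Ico 0 (π / 2))
    (hφ : φ ∈ Ico 0 (π / 2)) (hneg : b - a * sin θ ^ 2 < 0) (hpos : 0 < b - a * sin φ ^ 2) :
    φ ≤ θ := by
  have ha : 0 < a := pos_of_mul_pos_left (by linarith) (sq_nonneg (sin θ))
  have hsq : sin φ ^ 2 < sin θ ^ 2 := lt_of_mul_lt_mul_left (by linarith) ha.le
  have hsinθ : 0 ≤ sin θ := sin_nonneg_of_mem_Icc ⟨hθ.1, by linarith [hθ.2, pi_pos]⟩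
  have hsin : sin φ < sin θ := lt_of_pow_lt_pow_left₀ 2 hsinθ hsq
  exact (strictMonoOn_sin.lt_iff_lt ⟨by linarith [hφ.1, pi_pos], hφ.2.le⟩
    ⟨by linarith [hθ.1, pi_pos], hθ.2.le⟩).1 hsin |>.le

section ExponentialTilt

variable {q : ℝ → ℝ} {r t : ℝ}

theorem mul_cos_mem_Ioc (ht : 0 < t) {θ : ℝ} (hθ : θ ∈ Ico 0 (π / 2)) :
    t * cos θ ∈ Ioc 0 t :=
  ⟨mul_pos ht (cos_pos_of_mem_Ioo ⟨by linarith [hθ.1, pi_pos], hθ.2⟩),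
    mul_le_of_le_one_right ht.le (cos_le_one θ)⟩

theorem antitoneOn_comp_mul_cos {h : ℝ → ℝ} (ht : 0 < t) (hmono : MonotoneOn h (Ioc 0 t)) :
    AntitoneOn (fun θ => h (t * cos θ)) (Ico 0 (π / 2)) := by
  refine hmono.comp_AntitoneOn (fun θ hθ φ hφ hle => ?_) fun θ hθ => mul_cos_mem_Ioc ht hθ
  exact mul_le_mul_of_nonneg_left
    (cos_le_cos_of_nonneg_of_le_pi hθ.1 (by linarith [hφ.2, pi_pos]) hle) ht.le

theorem integrableOn_comp_mul_cos {h : ℝ → ℝ} (ht : 0 < t) (hmono : MonotoneOn h (Ioc 0 t))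
    (hh : ∀ u ∈ Ioc 0 t, 0 ≤ h u) :
    IntegrableOn (fun θ => h (t * cos θ)) (Ico 0 (π / 2)) := by
  refine IntegrableOn.of_bound measure_Ico_lt_top (aemeasurable_restrict_of_antitoneOn
    measurableSet_Ico (antitoneOn_comp_mul_cos ht hmono)).aestronglyMeasurable (h t) ?_
  refine (ae_restrict_iff' measurableSet_Ico).2 (.of_forall fun θ hθ => ?_)
  have hmem := mul_cos_mem_Ioc ht hθ
  rw [norm_of_nonneg (hh _ hmem)]
  exact hmono hmem ⟨ht, le_rfl⟩ hmem.2

theorem integrableOn_mul_comp_mul_cos {w : ℝ → ℝ} (hw : Continuous w) (ht : 0 < t)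
    (hmono : MonotoneOn (fun u => exp (-(r * u)) * q u) (Ioc 0 t))
    (hq : ∀ u ∈ Ioc 0 t, 0 ≤ q u) :
    IntegrableOn (fun θ => w θ * q (t * cos θ)) (Ico 0 (π / 2)) := by
  have htilt := integrableOn_comp_mul_cos ht hmono fun u hu => mul_nonneg (exp_pos _).le (hq u hu)
  have hweight : Continuous fun θ => w θ * exp (r * (t * cos θ)) := by fun_prop
  refine (htilt.continuousOn_mul_of_subset hweight.continuousOn isCompact_Icc measurableSet_Ico
    Ico_subset_Icc_self).congr_fun (fun θ _ => ?_) measurableSet_Ico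
  simp only [mul_assoc, exp_neg, mul_inv_cancel_left₀ (exp_ne_zero _)]

theorem angularMoment_pos (ht : 0 < t)
    (hmono : MonotoneOn (fun u => exp (-(r * u)) * q u) (Ioc 0 t))
    (hq : ∀ u ∈ Ioc 0 t, 0 < q u) (p : ℕ) :
    0 < angularMoment q p t := by
  rw [angularMoment_eq_integral_sin_pow]
  refine intervalIntegral.intervalIntegral_pos_of_pos_on
    ((intervalIntegrable_iff_integrableOn_Ico_of_le pi_div_two_pos.le).2 <|
      integrableOn_mul_comp_mul_cos (by fun_prop) ht hmono fun u hu => (hq u hu).le)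
    (fun θ hθ => ?_) pi_div_two_pos
  have hsin : 0 < sin θ := sin_pos_of_mem_Ioo ⟨hθ.1, by linarith [hθ.2, pi_pos]⟩
  exact mul_pos (pow_pos hsin p) (hq _ (mul_cos_mem_Ioc ht (Ioo_subset_Ico_self hθ)))

theorem integral_sub_mul_sin_sq_nonneg (ht : 0 < t)
    (hmono : MonotoneOn (fun u => exp (-(r * u)) * q u) (Ioc 0 t))
    (hq : ∀ u ∈ Ioc 0 t, 0 ≤ q u) (p : ℕ) :
    0 ≤ ∫ θ in Ico 0 (π / 2), (p + 1 - r * t * sin θ ^ 2) * sin θ ^ p * q (t * cos θ) := by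
  set f : ℝ → ℝ := fun θ => (p + 1 - r * t * sin θ ^ 2) * sin θ ^ p * exp (r * t * cos θ) with hf
  set g : ℝ → ℝ := fun θ => exp (-(r * (t * cos θ))) * q (t * cos θ) with hg
  have hfg : (fun θ => f θ * g θ) =
      fun θ => (p + 1 - r * t * sin θ ^ 2) * sin θ ^ p * q (t * cos θ) := by
    ext θ
    simp only [hf, hg, mul_assoc, exp_neg, mul_inv_cancel_left₀ (exp_ne_zero _)]
  have hg_anti : AntitoneOn g (Ico 0 (π / 2)) := antitoneOn_comp_mul_cos ht hmono
  have hf_int : 0 ≤ ∫ θ in Ico 0 (π / 2), f θ := by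
    rw [integral_Ico_eq_integral_Ioo, ← integral_Ioc_eq_integral_Ioo,
      ← intervalIntegral.integral_of_le pi_div_two_pos.le]
    exact integral_sin_pow_mul_exp_cos_nonneg (r * t) p
  have hsign : ∀ θ ∈ Ico 0 (π / 2), ∀ φ ∈ Ico 0 (π / 2), f θ < 0 → 0 < f φ → g θ ≤ g φ := by
    intro θ hθ φ hφ hfθ hfφ
    have hweight : ∀ ψ ∈ Ico 0 (π / 2), 0 ≤ sin ψ ^ p := fun ψ hψ =>
      pow_nonneg (sin_nonneg_of_mem_Icc ⟨hψ.1, by linarith [hψ.2, pi_pos]⟩) p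
    have hneg : p + 1 - r * t * sin θ ^ 2 < 0 :=
      neg_of_mul_neg_left (neg_of_mul_neg_left hfθ (exp_pos _).le) (hweight θ hθ)
    have hpos : 0 < p + 1 - r * t * sin φ ^ 2 :=
      pos_of_mul_pos_left (pos_of_mul_pos_left hfφ (exp_pos _).le) (hweight φ hφ)
    exact hg_anti hφ hθ (le_of_sub_mul_sin_sq_neg_of_pos (by positivity) hθ hφ hneg hpos)
  rw [← hfg]
  refine setIntegral_mul_nonneg_of_sign_change measurableSet_Ico
    (Continuous.integrableOn_Icc (by fun_prop) |>.mono_set Ico_subset_Icc_self) ?_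
    (fun θ hθ => mul_nonneg (exp_pos _).le (hq _ (mul_cos_mem_Ioc ht hθ)))
    (hg_anti.map_isLeast (isLeast_Ico pi_div_two_pos)).bddAbove hsign hf_int
  exact hfg ▸ integrableOn_mul_comp_mul_cos (by fun_prop) ht hmono hq

theorem mul_angularMoment_add_two_le (ht : 0 < t)
    (hmono : MonotoneOn (fun u => exp (-(r * u)) * q u) (Ioc 0 t))
    (hq : ∀ u ∈ Ioc 0 t, 0 ≤ q u) (p : ℕ) :
    r * t * angularMoment q (p + 2) t ≤ (p + 1) * angularMoment q p t := by
  have hmoment : ∀ n : ℕ, angularMoment q n t =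
      ∫ θ in Ico 0 (π / 2), sin θ ^ n * q (t * cos θ) := fun n => by
    rw [angularMoment_eq_integral_sin_pow, intervalIntegral.integral_of_le pi_div_two_pos.le,
      integral_Ioc_eq_integral_Ioo, integral_Ico_eq_integral_Ioo]
  have hint : ∀ n : ℕ, IntegrableOn (fun θ => sin θ ^ n * q (t * cos θ)) (Ico 0 (π / 2)) :=
    fun n => integrableOn_mul_comp_mul_cos (by fun_prop) ht hmono hq
  rw [← sub_nonneg, hmoment, hmoment, ← integral_const_mul, ← integral_const_mul,
    ← integral_sub ((hint p).const_mul _) ((hint (p + 2)).const_mul _)]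
  refine (integral_sub_mul_sin_sq_nonneg ht hmono hq p).trans_eq ?_
  congr with θ
  ring

end ExponentialTilt

section GammaRepresentation

variable {q ρ : ℝ → ℝ} {c u₀ : ℝ}

theorem intervalIntegrable_one_div_of_monotoneOn (hρpos : ∀ s ∈ Ioc 0 u₀, 0 < ρ s)
    (hρmono : MonotoneOn ρ (Ioc 0 u₀)) {u v : ℝ} (hu : u ∈ Ioc 0 u₀) (hv : v ∈ Ioc 0 u₀) :
    IntervalIntegrable (fun s => 1 / ρ s) volume u v := by
  have hanti : AntitoneOn (fun s => 1 / ρ s) (Ioc 0 u₀) := fun x hx y hy hxy =>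
    one_div_le_one_div_of_le (hρpos x hx) (hρmono hx hy hxy)
  exact (hanti.mono (ordConnected_Ioc.uIcc_subset hu hv)).intervalIntegrable

theorem sub_div_le_integral_one_div (hρpos : ∀ s ∈ Ioc 0 u₀, 0 < ρ s)
    (hρmono : MonotoneOn ρ (Ioc 0 u₀)) {u v t : ℝ} (hu : 0 < u) (huv : u ≤ v) (hvt : v ≤ t)
    (ht : t ≤ u₀) :
    (v - u) / ρ t ≤ ∫ s in u..v, 1 / ρ s := by
  have hmem : ∀ s, u ≤ s → s ≤ t → s ∈ Ioc 0 u₀ := fun s hus hst =>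
    ⟨hu.trans_le hus, hst.trans ht⟩
  have htmem := hmem t (huv.trans hvt) le_rfl
  calc (v - u) / ρ t = ∫ _ in u..v, 1 / ρ t := by
        rw [intervalIntegral.integral_const, smul_eq_mul, mul_one_div]
    _ ≤ ∫ s in u..v, 1 / ρ s := by
        refine intervalIntegral.integral_mono_on huv intervalIntegrable_const
          (intervalIntegrable_one_div_of_monotoneOn hρpos hρmono (hmem u le_rfl (huv.trans hvt))
            (hmem v huv hvt)) fun s hs => ?_
        have hsmem := hmem s hs.1 (hs.2.trans hvt)
        exact one_div_le_one_div_of_le (hρpos s hsmem)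
          (hρmono hsmem htmem (hs.2.trans hvt))

theorem monotoneOn_exp_neg_mul_of_eq_mul_exp_neg_integral (hc : 0 ≤ c)
    (hρpos : ∀ s ∈ Ioc 0 u₀, 0 < ρ s) (hρmono : MonotoneOn ρ (Ioc 0 u₀))
    (hrep : ∀ u ∈ Ioc 0 u₀, q u = c * exp (-∫ s in u..u₀, 1 / ρ s)) {t : ℝ} (ht : t ≤ u₀) :
    MonotoneOn (fun u => exp (-(1 / ρ t * u)) * q u) (Ioc 0 t) := by
  intro u hu v hv huv
  have hmem : ∀ s ∈ Ioc 0 t, s ∈ Ioc 0 u₀ := fun s hs => ⟨hs.1, hs.2.trans ht⟩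
  have hu₀ : u₀ ∈ Ioc 0 u₀ := ⟨hu.1.trans_le (hmem u hu).2, le_rfl⟩
  have hintegrable := fun s (hs : s ∈ Ioc 0 t) x (hx : x ∈ Ioc 0 u₀) =>
    intervalIntegrable_one_div_of_monotoneOn hρpos hρmono (hmem s hs) hx
  have hsplit : (∫ s in u..v, 1 / ρ s) + ∫ s in v..u₀, 1 / ρ s = ∫ s in u..u₀, 1 / ρ s :=
    intervalIntegral.integral_add_adjacent_intervals
      (hintegrable u hu v (hmem v hv)) (hintegrable v hv u₀ hu₀)
  have hlower := sub_div_le_integral_one_div hρpos hρmono hu.1 huv hv.2 ht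
  have hexponent : -(1 / ρ t * u) + -(∫ s in u..u₀, 1 / ρ s) ≤
      -(1 / ρ t * v) + -(∫ s in v..u₀, 1 / ρ s) := by
    have : (v - u) / ρ t = 1 / ρ t * v - 1 / ρ t * u := by ring
    linarith
  simp only [hrep u (hmem u hu), hrep v (hmem v hv), mul_left_comm _ c, ← exp_add]
  exact mul_le_mul_of_nonneg_left (exp_le_exp.2 hexponent) hc

theorem stmt14_general (hc : 0 < c) (hρpos : ∀ s ∈ Ioc 0 u₀, 0 < ρ s)
    (hρmono : MonotoneOn ρ (Ioc 0 u₀))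
    (hrep : ∀ u ∈ Ioc 0 u₀, q u = c * exp (-∫ s in u..u₀, 1 / ρ s))
    {t : ℝ} (ht : t ∈ Ioc 0 u₀) (p : ℕ) :
    angularMoment q (p + 2) t / angularMoment q p t * (t / ρ t) ≤ p + 1 := by
  have hq : ∀ u ∈ Ioc 0 t, 0 < q u := fun u hu => by
    rw [hrep u ⟨hu.1, hu.2.trans ht.2⟩]
    positivity
  have hmono :=
    monotoneOn_exp_neg_mul_of_eq_mul_exp_neg_integral hc.le hρpos hρmono hrep ht.2
  calc angularMoment q (p + 2) t / angularMoment q p t * (t / ρ t)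
      = 1 / ρ t * t * angularMoment q (p + 2) t / angularMoment q p t := by ring
    _ ≤ p + 1 := (div_le_iff₀ (angularMoment_pos ht.1 hmono hq p)).2
        (mul_angularMoment_add_two_le ht.1 hmono (fun u hu => (hq u hu).le) p)

end GammaRepresentation

/-- Lemma `flo`: a uniform bound on `(J₂⁽ⁱ⁾(t)/J₀⁽ⁱ⁾(t))·(t/ρ(t))` for a
family of densities `q_i` admitting a common Γ-representation
`q_i(u) = c_i·exp(−∫_u^{u₀} ds/ρ(s))` near 0. -/
theorem stmt14 (q : ℕ → ℝ → ℝ) (c : ℕ → ℝ) (ρ : ℝ → ℝ) (u₀ : ℝ) (hu₀ : 0 < u₀)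
    (hc : ∀ i, 0 < c i)
    (hρpos : ∀ s ∈ Set.Ioc (0:ℝ) u₀, 0 < ρ s)
    (hρcont : ContinuousOn ρ (Set.Ioc 0 u₀))
    (hρmono : MonotoneOn ρ (Set.Ioc 0 u₀))
    (hρ0 : Tendsto (fun s => ρ s / s) (nhdsWithin 0 (Set.Ioi 0)) (nhds 0))
    (hq_nonneg : ∀ i u, 0 ≤ q i u)
    (hq_int : ∀ i, ∫ u, q i u = 1)
    (hrep : ∀ i, ∀ u ∈ Set.Ioc (0:ℝ) u₀,
      q i u = c i * Real.exp (-∫ s in u..u₀, 1 / ρ s)) :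
    ∃ M : ℝ, ∃ t₁ > (0:ℝ), ∀ t : ℝ, 0 < t → t < t₁ → ∀ i : ℕ,
      ((∫ x in (0:ℝ)..1, x ^ 2 / Real.sqrt (1 - x^2) * q i (t * Real.sqrt (1 - x^2))) /
        (∫ x in (0:ℝ)..1, (1:ℝ) / Real.sqrt (1 - x^2) * q i (t * Real.sqrt (1 - x^2)))) *
        (t / ρ t) ≤ M := by
  refine ⟨1, u₀, hu₀, fun t ht htu i => ?_⟩
  simpa [angularMoment] using stmt14_general (hc i) hρpos hρmono (hrep i) ⟨ht, htu.le⟩ 0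
end

section
/- Let α > 0. Define, for θ > 0, μ(θ) = ∑_{i=1}^∞ 1/(e^{αi} + 2θ) and I(θ) = (1/2)∑_{i=1}^∞ log(1 + 2θ e^{−αi}) − θ·μ(θ). Then, as θ → ∞: (i) μ(θ) ∼ log(1 + 2θ e^{−α})/(2αθ); and (ii) I(θ) ∼ (1/(4α))·(log θ)², where ∼ means the ratio of the two sides tends to 1. -/
open Filter Real

open Asymptotics Set Topology

/-! Put `y = log (2θ)`. Then `2θ μ(θ)` and `∑ log (1 + 2θ e^{-αi})` are the sums over the grid
`y - α, y - 2α, …` of the sigmoid and of its primitive `log (1 + exp)`. If `g` is a nonnegative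
increasing function whose primitive `G` vanishes at `-∞`, comparing `α g` with the increments of `G`
and telescoping puts `α` times the grid sum of `g` between `G (y - α)` and `G y`. With `s` for
`log (1 + exp)` and `σ = s'`, the primitives needed are `s` for `σ`, and for `s` the functions
`s² / 2` and `s² / 2 + s`, whose derivatives `s σ` and `σ (1 + s)` enclose `s`. Since `s y ∼ y`,
the two grid sums are asymptotic to `y / α` and `y² / (2α)`, and the first is negligible in `I`. -/

section GridSum

/-- The sum of `g` over the grid `y - h, y - 2h, …`. Multiplied by `h`, it is a Riemann sum
for the integral of `g` over `(-∞, y]`; it is `0` when the series diverges. -/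
noncomputable def gridSum (g : ℝ → ℝ) (h y : ℝ) : ℝ :=
  ∑' i : ℕ, g (y - h * (i + 1))

variable {G g : ℝ → ℝ} {h a : ℝ}

theorem hasSum_grid_sub_of_monotone (hG : Monotone G) (hlim : Tendsto G atBot (𝓝 a)) (hh : 0 < h)
    (y : ℝ) : HasSum (fun i : ℕ ↦ G (y - h * i) - G (y - h * (i + 1))) (G y - a) := by
  have hnonneg (i : ℕ) : 0 ≤ G (y - h * i) - G (y - h * (i + 1)) :=
    sub_nonneg.2 (hG (by linarith))
  have hgrid : Tendsto (fun n : ℕ ↦ y - h * n) atTop atBot :=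
    tendsto_atBot_add_const_left _ y
      (tendsto_neg_atTop_atBot.comp (tendsto_natCast_atTop_atTop.const_mul_atTop hh))
  have htelescope (n : ℕ) :
      ∑ i ∈ Finset.range n, (G (y - h * i) - G (y - h * (i + 1))) = G y - G (y - h * n) := by
    simpa using Finset.sum_range_sub' (fun i : ℕ ↦ G (y - h * i)) n
  simpa only [hasSum_iff_tendsto_nat_of_nonneg hnonneg, htelescope] using!
    (hlim.comp hgrid).const_sub (G y)

theorem sub_mem_Icc_of_monotone_deriv (hG : ∀ x, HasDerivAt G (g x) x) (hg : Monotone g)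
    {x y : ℝ} (hxy : x < y) : G y - G x ∈ Icc ((y - x) * g x) ((y - x) * g y) := by
  obtain ⟨c, ⟨hxc, hcy⟩, hc⟩ := exists_hasDerivAt_eq_slope G g hxy
    (HasDerivAt.continuousOn fun x _ ↦ hG x) fun x _ ↦ hG x
  have hyx : 0 < y - x := sub_pos.2 hxy
  rw [eq_div_iff hyx.ne', mul_comm] at hc
  rw [← hc]
  exact ⟨mul_le_mul_of_nonneg_left (hg hxc.le) hyx.le,
    mul_le_mul_of_nonneg_left (hg hcy.le) hyx.le⟩

theorem grid_sub_mem_Icc (hG : ∀ x, HasDerivAt G (g x) x) (hg : Monotone g) (hh : 0 < h) (y : ℝ)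
    (i : ℕ) : G (y - h * i) - G (y - h * (i + 1)) ∈
      Icc (h * g (y - h * (i + 1))) (h * g (y - h * i)) := by
  have hmesh : y - h * i - (y - h * (i + 1)) = h := by ring
  have hlt : y - h * (i + 1) < y - h * i := by linarith
  simpa only [hmesh] using sub_mem_Icc_of_monotone_deriv hG hg hlt

theorem summable_grid (hG : ∀ x, HasDerivAt G (g x) x) (hg : Monotone g) (hg₀ : 0 ≤ g)
    (hlim : Tendsto G atBot (𝓝 a)) (hh : 0 < h) (y : ℝ) :
    Summable fun i : ℕ ↦ g (y - h * (i + 1)) :=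
  have hincr := hasSum_grid_sub_of_monotone (monotone_of_hasDerivAt_nonneg hG hg₀) hlim hh y
  (summable_mul_left_iff hh.ne').1 <| hincr.summable.of_nonneg_of_le
    (fun _ ↦ mul_nonneg hh.le (hg₀ _)) fun i ↦ (grid_sub_mem_Icc hG hg hh y i).1

theorem mul_gridSum_le (hG : ∀ x, HasDerivAt G (g x) x) (hg : Monotone g) (hg₀ : 0 ≤ g)
    (hlim : Tendsto G atBot (𝓝 a)) (hh : 0 < h) (y : ℝ) : h * gridSum g h y ≤ G y - a := by
  have hincr := hasSum_grid_sub_of_monotone (monotone_of_hasDerivAt_nonneg hG hg₀) hlim hh y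
  exact hasSum_le (fun i ↦ (grid_sub_mem_Icc hG hg hh y i).1)
    ((summable_grid hG hg hg₀ hlim hh y).hasSum.mul_left h) hincr

theorem le_mul_gridSum (hG : ∀ x, HasDerivAt G (g x) x) (hg : Monotone g) (hg₀ : 0 ≤ g)
    (hlim : Tendsto G atBot (𝓝 a)) (hh : 0 < h) (y : ℝ) :
    G (y - h) - a ≤ h * gridSum g h y := by
  have hincr := hasSum_grid_sub_of_monotone (monotone_of_hasDerivAt_nonneg hG hg₀) hlim hh (y - h)
  refine hasSum_le (fun i ↦ ?_) hincr ((summable_grid hG hg hg₀ hlim hh y).hasSum.mul_left h)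
  have hshift : y - h * (i + 1) = y - h - h * i := by ring
  rw [hshift]
  exact (grid_sub_mem_Icc hG hg hh (y - h) i).2

theorem gridSum_le_gridSum {f : ℝ → ℝ} {y : ℝ} (hfg : f ≤ g)
    (hf : Summable fun i : ℕ ↦ f (y - h * (i + 1)))
    (hg : Summable fun i : ℕ ↦ g (y - h * (i + 1))) : gridSum f h y ≤ gridSum g h y :=
  hf.tsum_le_tsum (fun _ ↦ hfg _) hg

end GridSum

section Softplus

/-- The softplus function `log (1 + exp y)`, a primitive of the sigmoid: it turns sums of
`log (1 + t * exp (-α * i))` into grid sums in the variable `log t`. -/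
noncomputable def softplus (y : ℝ) : ℝ :=
  log (1 + exp y)

theorem softplus_pos (y : ℝ) : 0 < softplus y :=
  log_pos (by linarith [exp_pos y])

theorem softplus_le_exp (y : ℝ) : softplus y ≤ exp y :=
  (log_le_sub_one_of_pos (by positivity)).trans_eq (add_sub_cancel_left 1 (exp y))

theorem sigmoid_eq_exp_div (y : ℝ) : sigmoid y = exp y / (1 + exp y) := by
  rw [sigmoid_def, exp_neg]
  field

theorem hasDerivAt_softplus (y : ℝ) : HasDerivAt softplus (sigmoid y) y := by
  rw [sigmoid_eq_exp_div]
  exact ((hasDerivAt_exp y).const_add 1).log (by positivity)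

theorem softplus_monotone : Monotone softplus :=
  monotone_of_hasDerivAt_nonneg hasDerivAt_softplus sigmoid_nonneg

theorem tendsto_softplus_atBot : Tendsto softplus atBot (𝓝 0) :=
  squeeze_zero (fun y ↦ (softplus_pos y).le) softplus_le_exp tendsto_exp_atBot

theorem softplus_eq_add_softplus_neg (y : ℝ) : softplus y = y + softplus (-y) := by
  have hfactor : 1 + exp y = exp y * (1 + exp (-y)) := by
    rw [mul_add, ← exp_add]
    simp [add_comm]
  rw [softplus, hfactor, log_mul (by positivity) (by positivity), log_exp, softplus]

theorem softplus_le_sigmoid_mul (y : ℝ) : softplus y ≤ sigmoid y * (1 + softplus y) := by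
  rw [sigmoid_eq_exp_div, div_mul_eq_mul_div, le_div_iff₀ (by positivity)]
  linarith [softplus_le_exp y]

theorem hasDerivAt_softplus_sq_half (y : ℝ) :
    HasDerivAt (fun x ↦ softplus x ^ 2 / 2) (softplus y * sigmoid y) y :=
  (((hasDerivAt_softplus y).pow 2).div_const 2).congr_deriv (by push_cast; ring)

theorem hasDerivAt_softplus_sq_half_add_softplus (y : ℝ) :
    HasDerivAt (fun x ↦ softplus x ^ 2 / 2 + softplus x) (sigmoid y * (1 + softplus y)) y :=
  ((hasDerivAt_softplus_sq_half y).add (hasDerivAt_softplus y)).congr_deriv (by ring)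

theorem softplus_mul_sigmoid_monotone : Monotone fun y ↦ softplus y * sigmoid y :=
  softplus_monotone.mul sigmoid_monotone (fun y ↦ (softplus_pos y).le) sigmoid_nonneg

theorem sigmoid_mul_one_add_softplus_monotone : Monotone fun y ↦ sigmoid y * (1 + softplus y) :=
  sigmoid_monotone.mul (softplus_monotone.const_add 1) sigmoid_nonneg
    fun y ↦ (add_pos one_pos (softplus_pos y)).le

theorem tendsto_softplus_sq_half_atBot : Tendsto (fun y ↦ softplus y ^ 2 / 2) atBot (𝓝 0) := by
  simpa using (tendsto_softplus_atBot.pow 2).div_const 2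

theorem tendsto_softplus_sq_half_add_softplus_atBot :
    Tendsto (fun y ↦ softplus y ^ 2 / 2 + softplus y) atBot (𝓝 0) := by
  simpa using tendsto_softplus_sq_half_atBot.add tendsto_softplus_atBot

end Softplus

section SoftplusGridSum

variable {α : ℝ}

theorem le_mul_gridSum_sigmoid (hα : 0 < α) (y : ℝ) :
    softplus (y - α) ≤ α * gridSum sigmoid α y := by
  simpa only [sub_zero] using le_mul_gridSum hasDerivAt_softplus sigmoid_monotone sigmoid_nonneg
    tendsto_softplus_atBot hα y

theorem mul_gridSum_sigmoid_le (hα : 0 < α) (y : ℝ) :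
    α * gridSum sigmoid α y ≤ softplus y := by
  simpa only [sub_zero] using mul_gridSum_le hasDerivAt_softplus sigmoid_monotone sigmoid_nonneg
    tendsto_softplus_atBot hα y

theorem summable_sigmoid_mul_one_add_softplus_grid (hα : 0 < α) (y : ℝ) :
    Summable fun i : ℕ ↦ sigmoid (y - α * (i + 1)) * (1 + softplus (y - α * (i + 1))) :=
  summable_grid hasDerivAt_softplus_sq_half_add_softplus sigmoid_mul_one_add_softplus_monotone
    (fun x ↦ (softplus_pos x).le.trans (softplus_le_sigmoid_mul x))
    tendsto_softplus_sq_half_add_softplus_atBot hα y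

theorem summable_softplus_grid (hα : 0 < α) (y : ℝ) :
    Summable fun i : ℕ ↦ softplus (y - α * (i + 1)) :=
  (summable_sigmoid_mul_one_add_softplus_grid hα y).of_nonneg_of_le
    (fun _ ↦ (softplus_pos _).le) fun _ ↦ softplus_le_sigmoid_mul _

theorem le_mul_gridSum_softplus (hα : 0 < α) (y : ℝ) :
    softplus (y - α) ^ 2 / 2 ≤ α * gridSum softplus α y := by
  let l (x : ℝ) : ℝ := softplus x * sigmoid x
  have hl₀ : 0 ≤ l := fun x ↦ mul_nonneg (softplus_pos x).le (sigmoid_nonneg x)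
  have hl_le : l ≤ softplus :=
    fun x ↦ mul_le_of_le_one_right (softplus_pos x).le (sigmoid_le_one x)
  have hsum := summable_grid hasDerivAt_softplus_sq_half softplus_mul_sigmoid_monotone hl₀
    tendsto_softplus_sq_half_atBot hα y
  calc softplus (y - α) ^ 2 / 2
    _ ≤ α * gridSum l α y := by
      simpa only [sub_zero] using le_mul_gridSum hasDerivAt_softplus_sq_half
        softplus_mul_sigmoid_monotone hl₀ tendsto_softplus_sq_half_atBot hα y
    _ ≤ α * gridSum softplus α y :=
      mul_le_mul_of_nonneg_left
        (gridSum_le_gridSum hl_le hsum (summable_softplus_grid hα y)) hα.le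

theorem mul_gridSum_softplus_le (hα : 0 < α) (y : ℝ) :
    α * gridSum softplus α y ≤ softplus y ^ 2 / 2 + softplus y := by
  let u (x : ℝ) : ℝ := sigmoid x * (1 + softplus x)
  have hu₀ : 0 ≤ u := fun x ↦ (softplus_pos x).le.trans (softplus_le_sigmoid_mul x)
  calc α * gridSum softplus α y
    _ ≤ α * gridSum u α y :=
      mul_le_mul_of_nonneg_left (gridSum_le_gridSum softplus_le_sigmoid_mul
        (summable_softplus_grid hα y) (summable_sigmoid_mul_one_add_softplus_grid hα y)) hα.le
    _ ≤ softplus y ^ 2 / 2 + softplus y := by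
      simpa only [sub_zero] using mul_gridSum_le hasDerivAt_softplus_sq_half_add_softplus
        sigmoid_mul_one_add_softplus_monotone hu₀ tendsto_softplus_sq_half_add_softplus_atBot hα y

end SoftplusGridSum

section Asymptotics

variable {α : ℝ}

theorem isEquivalent_squeeze {β : Type*} {l : Filter β} {u f v w : β → ℝ} (hu : u ~[l] w)
    (hv : v ~[l] w) (huf : u ≤ᶠ[l] f) (hfv : f ≤ᶠ[l] v) : f ~[l] w := by
  refine IsBigO.trans_isLittleO (.of_bound' ?_)
    (hu.isLittleO.norm_left.add hv.isLittleO.norm_left)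
  filter_upwards [huf, hfv] with x hux hvx
  have hmax : |f x - w x| ≤ max |u x - w x| |v x - w x| :=
    abs_le_max_abs_abs (sub_le_sub_right hux (w x)) (sub_le_sub_right hvx (w x))
  exact (hmax.trans (max_le_add_of_nonneg (abs_nonneg _) (abs_nonneg _))).trans (le_abs_self _)

theorem softplus_isEquivalent_id : softplus ~[atTop] id := by
  have hbounded : (fun y ↦ softplus (-y)) =O[atTop] fun _ ↦ (1 : ℝ) :=
    (tendsto_softplus_atBot.comp tendsto_neg_atTop_atBot).isBigO_one ℝ
  refine (IsEquivalent.refl.add_isLittleO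
    (hbounded.trans_isLittleO (isLittleO_const_id_atTop 1))).congr_left ?_
  exact .of_forall fun y ↦ (softplus_eq_add_softplus_neg y).symm

theorem softplus_sub_const_isEquivalent_id (c : ℝ) : (fun y ↦ softplus (y - c)) ~[atTop] id :=
  (softplus_isEquivalent_id.comp_tendsto (tendsto_atTop_add_const_right _ (-c) tendsto_id)).trans
    (IsEquivalent.refl.add_const_of_norm_tendsto_atTop tendsto_norm_atTop_atTop)

theorem mul_gridSum_sigmoid_isEquivalent (hα : 0 < α) :
    (fun y ↦ α * gridSum sigmoid α y) ~[atTop] id :=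
  isEquivalent_squeeze (softplus_sub_const_isEquivalent_id α) softplus_isEquivalent_id
    (.of_forall (le_mul_gridSum_sigmoid hα)) (.of_forall (mul_gridSum_sigmoid_le hα))

theorem id_isLittleO_sq_half : (id : ℝ → ℝ) =o[atTop] fun y ↦ y ^ 2 / 2 := by
  have hsq : (fun y : ℝ ↦ y ^ 1) =o[atTop] fun y ↦ y ^ 2 :=
    isLittleO_pow_pow_atTop_of_lt one_lt_two
  simpa only [pow_one, inv_mul_eq_div] using! hsq.const_mul_right (inv_ne_zero (two_ne_zero' ℝ))

theorem mul_gridSum_softplus_isEquivalent (hα : 0 < α) :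
    (fun y ↦ α * gridSum softplus α y) ~[atTop] fun y ↦ y ^ 2 / 2 := by
  have hsq {f : ℝ → ℝ} (hf : f ~[atTop] id) : (fun y ↦ f y ^ 2 / 2) ~[atTop] fun y ↦ y ^ 2 / 2 :=
    (hf.pow 2).div IsEquivalent.refl
  exact isEquivalent_squeeze (hsq (softplus_sub_const_isEquivalent_id α))
    ((hsq softplus_isEquivalent_id).add_isLittleO
      (softplus_isEquivalent_id.isBigO.trans_isLittleO id_isLittleO_sq_half))
    (.of_forall (le_mul_gridSum_softplus hα)) (.of_forall (mul_gridSum_softplus_le hα))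

theorem tendsto_mul_gridSum_sigmoid_div (hα : 0 < α) :
    Tendsto (fun y ↦ α * gridSum sigmoid α y / softplus (y - α)) atTop (𝓝 1) :=
  (isEquivalent_iff_tendsto_one (.of_forall fun y ↦ (softplus_pos (y - α)).ne')).1
    ((mul_gridSum_sigmoid_isEquivalent hα).trans (softplus_sub_const_isEquivalent_id α).symm)

theorem mul_gridSum_softplus_sub_sigmoid_isEquivalent (hα : 0 < α) :
    (fun y ↦ α * (gridSum softplus α y - gridSum sigmoid α y)) ~[atTop] fun y ↦ y ^ 2 / 2 := by
  simp only [mul_sub]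
  exact (mul_gridSum_softplus_isEquivalent hα).sub_isLittleO
    ((mul_gridSum_sigmoid_isEquivalent hα).isBigO.trans_isLittleO id_isLittleO_sq_half)

theorem log_const_mul_isEquivalent_log {c : ℝ} (hc : c ≠ 0) :
    (fun x ↦ log (c * x)) ~[atTop] log := by
  refine (IsEquivalent.refl.add_isLittleO
    (isLittleO_const_log_atTop (c := log c))).congr_left ?_
  filter_upwards [eventually_ne_atTop 0] with x hx
  rw [log_mul hc hx, Pi.add_apply, add_comm]

end Asymptotics

section LogVariable

variable {t : ℝ}

theorem gridSum_sigmoid_log (ht : 0 < t) (α : ℝ) :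
    gridSum sigmoid α (log t) = t * ∑' i : ℕ, 1 / (exp (α * (i + 1)) + t) := by
  rw [gridSum, ← tsum_mul_left]
  refine tsum_congr fun i ↦ ?_
  rw [sigmoid_eq_exp_div, exp_sub, exp_log ht]
  field

theorem softplus_log_sub (ht : 0 < t) (x : ℝ) :
    softplus (log t - x) = log (1 + t * exp (-x)) := by
  rw [softplus, sub_eq_add_neg, exp_add, exp_log ht]

theorem gridSum_softplus_log (ht : 0 < t) (α : ℝ) :
    gridSum softplus α (log t) = ∑' i : ℕ, log (1 + t * exp (-α * (i + 1))) :=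
  tsum_congr fun i ↦ by rw [softplus_log_sub ht, neg_mul]

end LogVariable

/-- computations in the proof of Proposition `Juliet`: with
`μ(θ) = ∑_{i≥1} 1/(e^{αi}+2θ)` and `I(θ) = (1/2)∑_{i≥1} log(1+2θe^{−αi}) − θμ(θ)`,
one has `μ(θ) ∼ log(1+2θe^{−α})/(2αθ)` and `I(θ) ∼ (log θ)²/(4α)` as `θ → ∞`. -/
theorem stmt18 (α : ℝ) (hα : 0 < α) (μ I : ℝ → ℝ)
    (hμ : ∀ θ, μ θ = ∑' i : ℕ, 1 / (Real.exp (α * ((i:ℝ) + 1)) + 2 * θ))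
    (hI : ∀ θ, I θ = (1/2) * (∑' i : ℕ, Real.log (1 + 2 * θ * Real.exp (-α * ((i:ℝ) + 1))))
        - θ * μ θ) :
    Tendsto (fun θ => μ θ / (Real.log (1 + 2 * θ * Real.exp (-α)) / (2 * α * θ)))
      atTop (nhds 1) ∧
    Tendsto (fun θ => I θ / ((1 / (4 * α)) * (Real.log θ) ^ 2)) atTop (nhds 1) := by
  have hμ_grid {θ : ℝ} (hθ : 0 < θ) : gridSum sigmoid α (log (2 * θ)) = 2 * θ * μ θ := by
    rw [hμ, gridSum_sigmoid_log (by positivity)]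
  have hlog : Tendsto (fun θ : ℝ ↦ log (2 * θ)) atTop atTop :=
    tendsto_log_atTop.comp (tendsto_id.const_mul_atTop two_pos)
  constructor
  · refine ((tendsto_mul_gridSum_sigmoid_div hα).comp hlog).congr' ?_
    filter_upwards [eventually_gt_atTop 0] with θ hθ
    rw [Function.comp_apply, hμ_grid hθ, softplus_log_sub (by positivity)]
    field
  · have hne : ∀ᶠ θ : ℝ in atTop, log θ ^ 2 / 2 ≠ 0 := by
      filter_upwards [eventually_gt_atTop 1] with θ hθ
      have := log_pos hθ
      positivity
    have hequiv := ((mul_gridSum_softplus_sub_sigmoid_isEquivalent hα).comp_tendsto hlog).trans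
      (((log_const_mul_isEquivalent_log two_ne_zero).pow 2).div IsEquivalent.refl)
    refine ((isEquivalent_iff_tendsto_one hne).1 hequiv).congr' ?_
    filter_upwards [eventually_gt_atTop 0] with θ hθ
    simp only [Pi.div_apply, Function.comp_apply]
    rw [hμ_grid hθ, gridSum_softplus_log (by positivity), hI]
    field
end
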